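/- For each n ≥ 3, the ideal ⟨det_q, X_{1n}⟩ of O_q(M_n) generated by the quantum determinant and X_{1n} is a completely prime ideal, i.e. O_q(M_n)/⟨det_q, X_{1n}⟩ is a domain. -/

import Mathlib

noncomputable section
open scoped BigOperators

/-- The defining relations of an `m × n` `q`-quantum matrix. -/
def IsQMat {k A : Type*} [Field k] [Ring A] [Algebra k A] (q : k) {m n : ℕ}
    (X : Fin m → Fin n → A) : Prop :=
  (∀ (i : Fin m) (j l : Fin n), j < l → X i j * X i l = q • (X i l * X i j)) ∧
  (∀ (i r : Fin m) (j : Fin n), i < r → X i j * X r j = q • (X r j * X i j)) ∧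
  (∀ (i r : Fin m) (j l : Fin n), i < r → j < l → X i l * X r j = X r j * X i l) ∧
  (∀ (i r : Fin m) (j l : Fin n), i < r → j < l →
    X i j * X r l - X r l * X i j = (q - q⁻¹) • (X i l * X r j))

/-- The relations defining `O_q(M_{m,n})` as a quotient of the free algebra. -/
inductive QMRel (k : Type*) [Field k] (q : k) (m n : ℕ) :
    FreeAlgebra k (Fin m × Fin n) → FreeAlgebra k (Fin m × Fin n) → Prop
  | row (i : Fin m) (j l : Fin n) (h : j < l) :
      QMRel k q m n (FreeAlgebra.ι k (i, j) * FreeAlgebra.ι k (i, l))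
        (q • (FreeAlgebra.ι k (i, l) * FreeAlgebra.ι k (i, j)))
  | col (i r : Fin m) (j : Fin n) (h : i < r) :
      QMRel k q m n (FreeAlgebra.ι k (i, j) * FreeAlgebra.ι k (r, j))
        (q • (FreeAlgebra.ι k (r, j) * FreeAlgebra.ι k (i, j)))
  | anti (i r : Fin m) (j l : Fin n) (h1 : i < r) (h2 : j < l) :
      QMRel k q m n (FreeAlgebra.ι k (i, l) * FreeAlgebra.ι k (r, j))
        (FreeAlgebra.ι k (r, j) * FreeAlgebra.ι k (i, l))
  | diag (i r : Fin m) (j l : Fin n) (h1 : i < r) (h2 : j < l) :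
      QMRel k q m n (FreeAlgebra.ι k (i, j) * FreeAlgebra.ι k (r, l))
        (FreeAlgebra.ι k (r, l) * FreeAlgebra.ι k (i, j) +
          (q - q⁻¹) • (FreeAlgebra.ι k (i, l) * FreeAlgebra.ι k (r, j)))

/-- The quantum matrix algebra `O_q(M_{m,n})`. -/
abbrev OqM (k : Type*) [Field k] (q : k) (m n : ℕ) := RingQuot (QMRel k q m n)

/-- The canonical generators `X_{ij}` of `O_q(M_{m,n})`. -/
def qX (k : Type*) [Field k] (q : k) (m n : ℕ) (i : Fin m) (j : Fin n) : OqM k q m n :=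
  RingQuot.mkAlgHom k (QMRel k q m n) (FreeAlgebra.ι k (i, j))

/-- The number of inversions (the length `ℓ(σ)`) of a permutation of `Fin t`. -/
def invCount {t : ℕ} (σ : Equiv.Perm (Fin t)) : ℕ :=
  Finset.card (Finset.univ.filter (fun p : Fin t × Fin t => p.1 < p.2 ∧ σ p.2 < σ p.1))

/-- The quantum determinant of a `t × t` matrix with entries in an algebra:
`Σ_σ (-q)^{ℓ(σ)} M_{1,σ(1)} ⋯ M_{t,σ(t)}`. -/
def qdet {k : Type*} [Field k] {A : Type*} [Ring A] [Algebra k A] (q : k) {t : ℕ}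
    (M : Fin t → Fin t → A) : A :=
  ∑ σ : Equiv.Perm (Fin t), ((-q) ^ invCount σ) • (List.ofFn (fun i => M i (σ i))).prod

/-- The quantum minor `[I|J]` of the matrix `X` on rows `I` and columns `J`. -/
def qminor {k : Type*} [Field k] {A : Type*} [Ring A] [Algebra k A] (q : k) {m n t : ℕ}
    (X : Fin m → Fin n → A) (I : Finset (Fin m)) (J : Finset (Fin n))
    (hI : I.card = t) (hJ : J.card = t) : A :=
  qdet q (fun a b => X (I.orderIsoOfFin hI a) (J.orderIsoOfFin hJ b))

/-- The elements `X'_{ij} = X_{ij} - q⁻¹ X_{1j} X_{in} X_{1n}⁻¹` in a localisation of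
`O_q(M_{m,n})` at the normal element `X_{1n}`, where `φ` is the localisation map and
`u = X_{1n}⁻¹`. -/
def Xp {k B : Type*} [Field k] [Ring B] [Algebra k B] (q : k) {m n : ℕ}
    (hm : 0 < m) (hn : 0 < n) (φ : OqM k q m n →ₐ[k] B) (u : B)
    (i : Fin m) (j : Fin n) : B :=
  φ (qX k q m n i j) -
    q⁻¹ • (φ (qX k q m n ⟨0, hm⟩ j) * φ (qX k q m n i ⟨n - 1, by omega⟩) * u)

/-!
Adding the cells one at a time, in a suitable order, presents the quantum matrix algebra as an
iterated Ore extension, and this remains true when some cells in the right column and the bottom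
row are omitted, in particular the cell of `X_{1n}`. Write `φ` for the inclusion of the algebra `B`
without the corner variable `x`. The determinant of size `m + 1` is central and linear in `x`, of
the form `φ d * x + φ e`, where `d` is the determinant of size `m`. Modulo it, every element becomes
an element of `B` after multiplication by a power of `d`, so it generates a completely prime ideal
as soon as `d` is a nonzero normal element with `d ∣ b * e → d ∣ b`. For this it suffices that `d`
is a normal prime of `B` not dividing `e`. The primality of `d` passes through an Ore extension by
comparing leading coefficients, so it follows by induction on the size, and `d ∤ e` is seen by
evaluating at the permutation matrix of a transposition. When `n ≥ 3` the omitted corner cell does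
not interfere with this evaluation.
-/

namespace QuantumMatrix

open Polynomial

/-- An element `d` with `R d ⊆ d R` and `d R ⊆ R d`. -/
structure IsNormal {R : Type*} [Ring R] (d : R) : Prop where
  dvd_mul_self (b : R) : d ∣ b * d
  exists_mul_eq (b : R) : ∃ c, d * b = c * d

/-- A normal element `d` such that a product lies in the ideal `d R` only if one of its factors
does. Both `d = 0` (then `R` has no zero divisors) and units are allowed. -/
structure IsNormalPrime {R : Type*} [Ring R] (d : R) : Prop extends IsNormal d where
  dvd_or_dvd {a b : R} : d ∣ a * b → d ∣ a ∨ d ∣ b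

section Normal

variable {R : Type*} [Ring R] {d : R}

lemma isNormal_zero : IsNormal (0 : R) :=
  ⟨fun _ => by simp, fun _ => ⟨0, by simp⟩⟩

lemma IsNormal.dvd_mul_of_dvd (hd : IsNormal d) {a : R} (b : R) (h : d ∣ a) : d ∣ b * a := by
  obtain ⟨c, rfl⟩ := h
  exact mul_assoc b d c ▸ (hd.dvd_mul_self b).mul_right c

lemma IsNormal.exists_pow_mul_eq (hd : IsNormal d) (N : ℕ) (b : R) :
    ∃ c, d ^ N * b = c * d ^ N := by
  induction N generalizing b with
  | zero => exact ⟨b, by simp⟩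
  | succ N ih =>
    obtain ⟨c, hc⟩ := hd.exists_mul_eq b
    obtain ⟨c', hc'⟩ := ih c
    exact ⟨c', by rw [pow_succ, mul_assoc, hc, ← mul_assoc, hc', mul_assoc]⟩

lemma isNormalPrime_zero_iff : IsNormalPrime (0 : R) ↔ NoZeroDivisors R := by
  refine ⟨fun h => ⟨fun hab => by simpa using h.dvd_or_dvd (zero_dvd_iff.2 hab)⟩, fun _ => ?_⟩
  exact ⟨isNormal_zero, by simp⟩

lemma IsNormal.of_commute (hd : ∀ b, Commute d b) : IsNormal d :=
  ⟨fun b => ⟨b, (hd b).eq.symm⟩, fun b => ⟨b, (hd b).eq⟩⟩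

end Normal

section OreEval

variable {k B E : Type*} [CommRing k] [Ring B] [Algebra k B] [Ring E] [Algebra k E]
  {φ : B →ₐ[k] E} {x : E}

/-- The map `∑ bᵢ Xⁱ ↦ ∑ φ(bᵢ) xⁱ`, for a variable `x` that need not commute with the
coefficients. -/
def oreEval (φ : B →ₐ[k] E) (x : E) : B[X] →ₗ[k] E :=
  Polynomial.lsum fun i => LinearMap.mulRight k (x ^ i) ∘ₗ φ.toLinearMap

@[simp]
lemma oreEval_monomial (i : ℕ) (b : B) : oreEval φ x (monomial i b) = φ b * x ^ i := by
  simp [oreEval]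

@[simp]
lemma oreEval_C (b : B) : oreEval φ x (C b) = φ b := by
  simp [← monomial_zero_left]

lemma oreEval_C_mul (b : B) (p : B[X]) : oreEval φ x (C b * p) = φ b * oreEval φ x p := by
  induction p using Polynomial.induction_on' with
  | add p p' hp hp' => simp only [mul_add, map_add, hp, hp']
  | monomial i c => simp [C_mul_monomial, mul_assoc]

lemma dvd_oreEval {d : B} {p : B[X]} (h : ∀ i, d ∣ p.coeff i) : φ d ∣ oreEval φ x p := by
  obtain ⟨p', rfl⟩ := C_dvd_iff_dvd_coeff d p |>.2 h
  exact ⟨_, oreEval_C_mul d p'⟩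

lemma dvd_oreEval_iff (h : Function.Bijective (oreEval φ x)) {d : B} {p : B[X]} :
    φ d ∣ oreEval φ x p ↔ ∀ i, d ∣ p.coeff i := by
  refine ⟨?_, dvd_oreEval⟩
  rintro ⟨y, hy⟩
  obtain ⟨p', rfl⟩ := h.2 y
  rw [← oreEval_C_mul] at hy
  exact (C_dvd_iff_dvd_coeff d p).1 ⟨p', h.1 hy⟩

end OreEval

section LinearElement

variable {k B E : Type*} [CommRing k] [Ring B] [Algebra k B] [Ring E] [Algebra k E]
  {φ : B →ₐ[k] E} {x : E} {d e : B}

lemma linear_mul_oreEval (hD : ∀ y, Commute (φ d * x + φ e) y) (p : B[X]) :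
    (φ d * x + φ e) * oreEval φ x p = oreEval φ x (p * (C d * X + C e)) := by
  induction p using Polynomial.induction_on' with
  | add p p' hp hp' => rw [map_add, mul_add, hp, hp', add_mul, map_add]
  | monomial i b =>
    have hmul : monomial i b * (C d * X + C e) = monomial (i + 1) (b * d) + monomial i (b * e) := by
      rw [mul_add, ← mul_assoc, monomial_mul_C, monomial_mul_X, monomial_mul_C]
    rw [hmul, map_add, oreEval_monomial, oreEval_monomial, oreEval_monomial, ← mul_assoc,
      (hD (φ b)).eq, mul_add, add_mul, pow_succ', map_mul, map_mul]
    simp only [mul_assoc]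

lemma linear_dvd_of_dvd_mul [NoZeroDivisors B] (h : Function.Bijective (oreEval φ x))
    (hd : IsNormal d) (hd0 : d ≠ 0) (hde : ∀ b, d ∣ b * e → d ∣ b)
    (hD : ∀ y, Commute (φ d * x + φ e) y) {a : E} (ha : φ d * x + φ e ∣ φ d * a) :
    φ d * x + φ e ∣ a := by
  obtain ⟨y, hy⟩ := ha
  obtain ⟨p, rfl⟩ := h.2 y
  obtain ⟨r, rfl⟩ := h.2 a
  have hpr : C d * r = p * (C d * X + C e) :=
    h.1 (by rw [oreEval_C_mul, hy, linear_mul_oreEval hD])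
  have hp : ∀ i, d ∣ p.coeff i := fun i => by
    refine hde _ ?_
    have hXd : d ∣ (p * (C d * X)).coeff i := by
      rw [← X_mul_C, ← mul_assoc, coeff_mul_C]
      exact hd.dvd_mul_self _
    have hsum : d ∣ (p * (C d * X)).coeff i + p.coeff i * e :=
      ⟨r.coeff i, by rw [← coeff_C_mul, hpr, mul_add, coeff_add, coeff_mul_C]⟩
    exact (dvd_add_right hXd).1 hsum
  obtain ⟨p', rfl⟩ := (C_dvd_iff_dvd_coeff d p).2 hp
  rw [mul_assoc] at hpr
  have hr : r = p' * (C d * X + C e) := mul_left_cancel₀ (C_ne_zero.2 hd0) hpr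
  exact ⟨oreEval φ x p', by rw [hr, linear_mul_oreEval hD]⟩

lemma exists_linear_dvd_pow_mul_sub (h : Function.Surjective (oreEval φ x)) (hd : IsNormal d)
    (hD : ∀ y, Commute (φ d * x + φ e) y) (a : E) :
    ∃ (N : ℕ) (b : B), φ d * x + φ e ∣ φ (d ^ N) * a - φ b := by
  have hDN : IsNormal (φ d * x + φ e) := .of_commute hD
  obtain ⟨p, rfl⟩ := h a
  induction p using Polynomial.induction_on' with
  | add p p' hp hp' =>
    obtain ⟨N, b, hb⟩ := hp
    obtain ⟨N', b', hb'⟩ := hp'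
    refine ⟨N' + N, d ^ N' * b + d ^ N * b', ?_⟩
    convert dvd_add (hDN.dvd_mul_of_dvd (φ (d ^ N')) hb) (hDN.dvd_mul_of_dvd (φ (d ^ N)) hb')
      using 1
    simp only [mul_sub, map_add, map_mul, map_pow, mul_add, ← mul_assoc, ← pow_add, add_comm N N']
    abel
  | monomial i b =>
    rw [oreEval_monomial]
    induction i generalizing b with
    | zero => exact ⟨0, b, by simp⟩
    | succ i ih =>
      obtain ⟨b', hb'⟩ := hd.exists_mul_eq b
      obtain ⟨N, c, hc⟩ := ih (-(b' * e))
      refine ⟨N + 1, c, ?_⟩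
      have hlead : φ d * (φ b * x ^ (i + 1)) =
          (φ d * x + φ e) * (φ b' * x ^ i) + φ (-(b' * e)) * x ^ i := by
        rw [← mul_assoc, ← map_mul, hb', ← mul_assoc, (hD _).eq, mul_add, add_mul, ← mul_assoc,
          map_mul, map_neg, map_mul, pow_succ', ← mul_assoc, neg_mul, add_neg_cancel_right]
      rw [pow_succ, map_mul, mul_assoc, hlead, mul_add, add_sub_assoc]
      exact dvd_add (hDN.dvd_mul_of_dvd _ (dvd_mul_right _ _)) hc

lemma eq_zero_of_linear_dvd [NoZeroDivisors B] (h : Function.Bijective (oreEval φ x))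
    (hd0 : d ≠ 0) (hD : ∀ y, Commute (φ d * x + φ e) y) {b : B} (hb : φ d * x + φ e ∣ φ b) :
    b = 0 := by
  obtain ⟨y, hy⟩ := hb
  obtain ⟨p, rfl⟩ := h.2 y
  have hbp : C b = p * (C d * X + C e) :=
    h.1 (by rw [oreEval_C, hy, linear_mul_oreEval hD])
  by_contra hb0
  have hp : p ≠ 0 := fun hp => hb0 (by simpa [hp] using hbp)
  have hdeg := congrArg natDegree hbp
  rw [natDegree_C, natDegree_mul hp (fun h0 => hd0 (by simpa using congrArg (coeff · 1) h0)),
    natDegree_linear hd0] at hdeg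
  omega

/-- Modulo a central element `φ d * x + φ e`, every element of `E` becomes an element of `B` after
multiplication by a power of `d`. -/
theorem isNormalPrime_linear [NoZeroDivisors B] (h : Function.Bijective (oreEval φ x))
    (hd : IsNormal d) (hd0 : d ≠ 0) (hde : ∀ b, d ∣ b * e → d ∣ b)
    (hD : ∀ y, Commute (φ d * x + φ e) y) : IsNormalPrime (φ d * x + φ e) := by
  have hDN : IsNormal (φ d * x + φ e) := .of_commute hD
  have cancel : ∀ N a, φ d * x + φ e ∣ φ (d ^ N) * a → φ d * x + φ e ∣ a := fun N => by
    induction N with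
    | zero => simp
    | succ N ih =>
      intro a ha
      rw [pow_succ, map_mul, mul_assoc] at ha
      exact linear_dvd_of_dvd_mul h hd hd0 hde hD (ih _ ha)
  refine ⟨hDN, fun {a b} hab => ?_⟩
  obtain ⟨N, a', ha'⟩ := exists_linear_dvd_pow_mul_sub h.2 hd hD a
  obtain ⟨M, b', hb'⟩ := exists_linear_dvd_pow_mul_sub h.2 hd hD b
  obtain ⟨a'', ha''⟩ := hd.exists_pow_mul_eq M a'
  have hab' : φ d * x + φ e ∣ φ a' * b := by
    have := dvd_sub (hDN.dvd_mul_of_dvd (φ (d ^ N)) hab) (ha'.mul_right b)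
    rwa [sub_mul, mul_assoc, sub_sub_cancel] at this
  have hab'' : φ d * x + φ e ∣ φ (a'' * b') := by
    have := dvd_sub (hDN.dvd_mul_of_dvd (φ (d ^ M)) hab') (hDN.dvd_mul_of_dvd (φ a'') hb')
    rwa [← mul_assoc, ← map_mul, ha'', map_mul, mul_sub, mul_assoc, sub_sub_cancel,
      ← map_mul] at this
  rcases mul_eq_zero.1 (eq_zero_of_linear_dvd h hd0 hD hab'') with ha | hb
  · rw [ha, zero_mul] at ha''
    have ha0 : a' = 0 := (mul_eq_zero.1 ha'').resolve_left (pow_ne_zero M hd0)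
    exact .inl (cancel N a (by simpa [ha0] using ha'))
  · exact .inr (cancel M b (by simpa [hb] using hb'))

end LinearElement

section OreExtension

variable {k B E : Type*} [CommRing k] [Ring B] [Algebra k B] [Ring E] [Algebra k E]

/-- Left multiplication by the variable in the Ore extension `B[X; σ, δ]`, whose elements are
written as polynomials with coefficients on the left: `b Xⁱ ↦ σ(b) Xⁱ⁺¹ + δ(b) Xⁱ`. -/
def oreShift (σ δ : B →ₗ[k] B) : Module.End k B[X] :=
  Polynomial.lsum fun i => (monomial (i + 1)).restrictScalars k ∘ₗ σ +
    (monomial i).restrictScalars k ∘ₗ δ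

@[simp]
lemma oreShift_monomial (σ δ : B →ₗ[k] B) (i : ℕ) (b : B) :
    oreShift σ δ (monomial i b) = monomial (i + 1) (σ b) + monomial i (δ b) := by
  simp [oreShift]

lemma coeff_oreShift_succ (σ δ : B →ₗ[k] B) (p : B[X]) (i : ℕ) :
    (oreShift σ δ p).coeff (i + 1) = σ (p.coeff i) + δ (p.coeff (i + 1)) := by
  induction p using Polynomial.induction_on' with
  | add p p' hp hp' => simp only [map_add, coeff_add, hp, hp']; abel
  | monomial j b =>
    simp only [oreShift_monomial, coeff_add, coeff_monomial, add_left_inj]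
    split_ifs <;> simp

lemma mul_oreEval {φ : B →ₐ[k] E} {x : E} {σ δ : B →ₗ[k] B}
    (h : ∀ b, x * φ b = φ (σ b) * x + φ (δ b)) (p : B[X]) :
    x * oreEval φ x p = oreEval φ x (oreShift σ δ p) := by
  induction p using Polynomial.induction_on' with
  | add p p' hp hp' => rw [map_add, mul_add, hp, hp', map_add, map_add]
  | monomial i b =>
    rw [oreEval_monomial, ← mul_assoc, h, oreShift_monomial, map_add, oreEval_monomial,
      oreEval_monomial, add_mul, mul_assoc, ← pow_succ']

lemma oreShift_C_mul {σ δ : B →ₗ[k] B} (hσ : ∀ a b, σ (a * b) = σ a * σ b)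
    (hδ : ∀ a b, δ (a * b) = σ a * δ b + δ a * b) (a : B) (p : B[X]) :
    oreShift σ δ (C a * p) = C (σ a) * oreShift σ δ p + C (δ a) * p := by
  induction p using Polynomial.induction_on' with
  | add p p' hp hp' => simp only [mul_add, map_add, hp, hp']; abel
  | monomial i b =>
    simp only [C_mul_monomial, oreShift_monomial, hσ, hδ, mul_add, map_add, add_assoc]

lemma oreShift_pow_one {σ δ : B →ₗ[k] B} (hσ : σ 1 = 1) (hδ : δ 1 = 0) (i : ℕ) :
    (oreShift σ δ ^ i) 1 = X ^ i := by
  induction i with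
  | zero => simp
  | succ i ih =>
    rw [pow_succ', Module.End.mul_apply, ih, ← monomial_one_right_eq_X_pow, oreShift_monomial, hσ,
      hδ, map_zero, add_zero, monomial_one_right_eq_X_pow]

/-- `E` is the Ore extension `B[x; σ, δ]`, with `B` embedded by `φ`. -/
structure IsOreExtension (φ : B →ₐ[k] E) (x : E) (σ : B ≃ₐ[k] B) (δ : B →ₗ[k] B) : Prop where
  mul_map (b : B) : x * φ b = φ (σ b) * x + φ (δ b)
  bijective_oreEval : Function.Bijective (oreEval φ x)

namespace IsOreExtension

variable {φ : B →ₐ[k] E} {x : E} {σ : B ≃ₐ[k] B} {δ : B →ₗ[k] B}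

/-- The action on `1 : B[X]` shows that the monomials `b xⁱ` are independent. -/
lemma of_representation (hmul : ∀ b, x * φ b = φ (σ b) * x + φ (δ b))
    (hδ : δ 1 = 0) (hsurj : Function.Surjective (oreEval φ x)) (ρ : E →ₐ[k] Module.End k B[X])
    (hρφ : ∀ b, ρ (φ b) = LinearMap.mulLeft k (C b)) (hρx : ρ x = oreShift σ.toLinearMap δ) :
    IsOreExtension φ x σ δ := by
  have heval (p : B[X]) : ρ (oreEval φ x p) 1 = p := by
    induction p using Polynomial.induction_on' with
    | add p p' hp hp' => rw [map_add, map_add, LinearMap.add_apply, hp, hp']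
    | monomial i b =>
      rw [oreEval_monomial, map_mul, map_pow, hρφ, hρx, Module.End.mul_apply,
        oreShift_pow_one (map_one σ) hδ, LinearMap.mulLeft_apply, C_mul_X_pow_eq_monomial]
  exact ⟨hmul, Function.LeftInverse.injective (g := fun y => ρ y 1) heval, hsurj⟩

lemma injective (h : IsOreExtension φ x σ δ) : Function.Injective φ := fun b c hbc =>
  C_injective (h.bijective_oreEval.1 (by simpa using hbc))

lemma oreEval_mul_oreEval (h : IsOreExtension φ x σ δ) (p p' : B[X]) :
    oreEval φ x p * oreEval φ x p' =
      oreEval φ x (p.sum fun i b => C b * (oreShift σ.toLinearMap δ ^ i) p') := by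
  have hpow (i : ℕ) : x ^ i * oreEval φ x p' =
      oreEval φ x ((oreShift σ.toLinearMap δ ^ i) p') := by
    induction i with
    | zero => simp
    | succ i ih =>
      rw [pow_succ', mul_assoc, ih, mul_oreEval (σ := σ.toLinearMap) h.mul_map, pow_succ',
        Module.End.mul_apply]
  conv_lhs => rw [← p.sum_monomial_eq]
  simp only [Polynomial.sum, map_sum, Finset.sum_mul, oreEval_monomial, mul_assoc, hpow,
    oreEval_C_mul]

end IsOreExtension

lemma coeff_oreShift_pow {σ δ : B →ₗ[k] B} {p : B[X]} {n : ℕ} (hp : ∀ j, n < j → p.coeff j = 0)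
    (i : ℕ) : (∀ j, i + n < j → ((oreShift σ δ ^ i) p).coeff j = 0) ∧
      ((oreShift σ δ ^ i) p).coeff (i + n) = (σ ^ i) (p.coeff n) := by
  induction i with
  | zero => simpa using hp
  | succ i ih =>
    rw [pow_succ', Module.End.mul_apply]
    refine ⟨fun j hj => ?_, ?_⟩
    · obtain ⟨j, rfl⟩ : ∃ j', j = j' + 1 := ⟨j - 1, by omega⟩
      rw [coeff_oreShift_succ, ih.1 j (by omega), ih.1 (j + 1) (by omega), map_zero, map_zero,
        add_zero]
    · rw [add_right_comm, coeff_oreShift_succ, ih.2, ih.1 _ (by omega), map_zero, add_zero,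
        pow_succ', Module.End.mul_apply]

lemma coeff_oreMul {σ δ : B →ₗ[k] B} {p p' : B[X]} {m n : ℕ} (hp : ∀ j, m < j → p.coeff j = 0)
    (hp' : ∀ j, n < j → p'.coeff j = 0) :
    (p.sum fun i b => C b * (oreShift σ δ ^ i) p').coeff (m + n) =
      p.coeff m * (σ ^ m) (p'.coeff n) := by
  rw [Polynomial.sum, finsetSum_coeff, Finset.sum_eq_single m]
  · rw [coeff_C_mul, (coeff_oreShift_pow hp' m).2]
  · intro i hi him
    have him' : i ≤ m := not_lt.1 fun h => mem_support_iff.1 hi (hp i h)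
    rw [coeff_C_mul, (coeff_oreShift_pow hp' i).1 _ (by omega), mul_zero]
  · intro hm
    simp [notMem_support_iff.1 hm]

lemma coeff_erase_eq_zero {p : B[X]} {m : ℕ} (hp : ∀ j, m + 1 ≤ j → p.coeff j = 0) (j : ℕ)
    (hj : m ≤ j) : (p.erase m).coeff j = 0 := by
  rcases hj.eq_or_lt with rfl | hj
  · exact erase_same p m
  · rw [erase_ne p hj.ne', hp j hj]

namespace IsOreExtension

variable {φ : B →ₐ[k] E} {x : E} {σ : B ≃ₐ[k] B} {δ : B →ₗ[k] B} {d : B}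

lemma oreEval_erase_add (p : B[X]) (m : ℕ) :
    oreEval φ x (p.erase m) + φ (p.coeff m) * x ^ m = oreEval φ x p := by
  rw [← oreEval_monomial, ← map_add, add_comm, monomial_add_erase]

lemma dvd_of_dvd_pow_apply (hσ : ∀ b, d ∣ σ b → d ∣ b) {m : ℕ} {b : B}
    (hb : d ∣ (σ.toLinearMap ^ m) b) : d ∣ b := by
  induction m with
  | zero => simpa using hb
  | succ m ih => exact ih (hσ _ (by rwa [pow_succ'] at hb))

lemma dvd_oreEval_or_dvd_oreEval (h : IsOreExtension φ x σ δ) (hd : IsNormalPrime d)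
    (hdE : IsNormal (φ d)) (hσ : ∀ b, d ∣ σ b → d ∣ b) {m n : ℕ} {p p' : B[X]}
    (hp : ∀ j, m ≤ j → p.coeff j = 0) (hp' : ∀ j, n ≤ j → p'.coeff j = 0)
    (hdvd : φ d ∣ oreEval φ x p * oreEval φ x p') :
    φ d ∣ oreEval φ x p ∨ φ d ∣ oreEval φ x p' := by
  induction m generalizing n p p' with
  | zero => exact .inl (dvd_oreEval fun i => by simp [hp i])
  | succ m ihm =>
    induction n generalizing p' with
    | zero => exact .inr (dvd_oreEval fun i => by simp [hp' i])
    | succ n ihn =>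
      have hlead : d ∣ p.coeff m ∨ d ∣ p'.coeff n := by
        rw [h.oreEval_mul_oreEval, dvd_oreEval_iff h.bijective_oreEval] at hdvd
        have := hdvd (m + n)
        rw [coeff_oreMul (fun j hj => hp j hj) (fun j hj => hp' j hj)] at this
        exact (hd.dvd_or_dvd this).imp_right (dvd_of_dvd_pow_apply hσ)
      rcases hlead with hm | hn
      · have hm' : φ d ∣ φ (p.coeff m) * x ^ m := (map_dvd φ hm).mul_right _
        rw [← oreEval_erase_add p m] at hdvd ⊢
        rw [dvd_add_left hm']
        rw [add_mul, dvd_add_left (hm'.mul_right _)] at hdvd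
        exact ihm (coeff_erase_eq_zero hp) hp' hdvd
      · have hn' : φ d ∣ φ (p'.coeff n) * x ^ n := (map_dvd φ hn).mul_right _
        rw [← oreEval_erase_add p' n] at hdvd ⊢
        rw [dvd_add_left hn']
        rw [mul_add, dvd_add_left (hdE.dvd_mul_of_dvd _ hn')] at hdvd
        exact ihn (coeff_erase_eq_zero hp') hdvd

end IsOreExtension

end OreExtension

section OreExtension

variable {k B E : Type*} [Field k] [Ring B] [Algebra k B] [Ring E] [Algebra k E]
  {φ : B →ₐ[k] E} {x : E} {σ : B ≃ₐ[k] B} {δ : B →ₗ[k] B} {d : B} {c : k}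

namespace IsOreExtension

lemma map_eq_smul (h : IsOreExtension φ x σ δ) (hx : x * φ d = c • (φ d * x)) :
    σ d = c • d := by
  rw [h.mul_map] at hx
  have : monomial 1 (σ d) + C (δ d) = monomial 1 (c • d) :=
    h.bijective_oreEval.1 (by simpa using hx)
  simpa using congrArg (coeff · 1) this

lemma isNormal_map (h : IsOreExtension φ x σ δ) (hd : IsNormal d) (hc : c ≠ 0)
    (hx : x * φ d = c • (φ d * x)) : IsNormal (φ d) := by
  have hpow (i : ℕ) : x ^ i * φ d = c ^ i • (φ d * x ^ i) := by
    induction i with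
    | zero => simp
    | succ i ih =>
      rw [pow_succ, mul_assoc, hx, mul_smul_comm, ← mul_assoc, ih, smul_mul_assoc, smul_smul,
        mul_assoc, pow_succ']
  refine ⟨fun y => ?_, fun y => ?_⟩ <;> obtain ⟨p, rfl⟩ := h.bijective_oreEval.2 y <;>
    induction p using Polynomial.induction_on' with
    | add p p' hp hp' => ?_
    | monomial i b => ?_
  · rw [map_add, add_mul]
    exact dvd_add hp hp'
  · obtain ⟨b', hb'⟩ := hd.dvd_mul_self b
    rw [oreEval_monomial, mul_assoc, hpow, mul_smul_comm, ← mul_assoc, ← map_mul, hb', map_mul,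
      mul_assoc, ← mul_smul_comm]
    exact dvd_mul_right _ _
  · obtain ⟨y, hy⟩ := hp
    obtain ⟨y', hy'⟩ := hp'
    exact ⟨y + y', by rw [map_add, mul_add, add_mul, hy, hy']⟩
  · obtain ⟨b', hb'⟩ := hd.exists_mul_eq b
    refine ⟨(c ^ i)⁻¹ • (φ b' * x ^ i), ?_⟩
    rw [oreEval_monomial, smul_mul_assoc, mul_assoc, hpow, mul_smul_comm, smul_smul,
      inv_mul_cancel₀ (pow_ne_zero i hc), one_smul, ← mul_assoc, ← mul_assoc, ← map_mul, hb',
      map_mul]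

theorem isNormalPrime_map (h : IsOreExtension φ x σ δ) (hd : IsNormalPrime d) (hc : c ≠ 0)
    (hx : x * φ d = c • (φ d * x)) : IsNormalPrime (φ d) := by
  have hdE := h.isNormal_map hd.toIsNormal hc hx
  have hσd : σ.symm d = c⁻¹ • d := by
    rw [σ.symm_apply_eq, map_smul, h.map_eq_smul hx, smul_smul, inv_mul_cancel₀ hc, one_smul]
  have hσ : ∀ b, d ∣ σ b → d ∣ b := by
    rintro b ⟨b', hb'⟩
    refine ⟨c⁻¹ • σ.symm b', ?_⟩
    rw [← σ.symm_apply_apply b, hb', map_mul, hσd, smul_mul_assoc, mul_smul_comm]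
  refine ⟨hdE, fun {y y'} hyy' => ?_⟩
  obtain ⟨p, rfl⟩ := h.bijective_oreEval.2 y
  obtain ⟨p', rfl⟩ := h.bijective_oreEval.2 y'
  exact h.dvd_oreEval_or_dvd_oreEval hd hdE hσ
    (fun j hj => coeff_eq_zero_of_natDegree_lt (Nat.lt_of_succ_le hj))
    (fun j hj => coeff_eq_zero_of_natDegree_lt (Nat.lt_of_succ_le hj)) hyy'

end IsOreExtension

end OreExtension

section CellAlgebra

variable {k : Type*} [Field k] {A A' : Type*} [Ring A] [Algebra k A] [Ring A'] [Algebra k A']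
  {q : k} {S : Set (ℕ × ℕ)} {X : ℕ × ℕ → A}

/-- A family `X` supported on a set `S` of cells that satisfies the quantum matrix relations,
except that the relation between `Xᵢⱼ` and `Xᵣₗ` for `i < r`, `j < l` is imposed only if
`(r, l) ∈ S`. If `S` is a rectangle this is the notion of a quantum matrix. -/
structure IsQuantumOn (q : k) (S : Set (ℕ × ℕ)) (X : ℕ × ℕ → A) : Prop where
  row (i : ℕ) {j l : ℕ} (hjl : j < l) : X (i, j) * X (i, l) = q • (X (i, l) * X (i, j))
  col {i r : ℕ} (j : ℕ) (hir : i < r) : X (i, j) * X (r, j) = q • (X (r, j) * X (i, j))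
  anti {i r j l : ℕ} (hir : i < r) (hjl : j < l) : X (i, l) * X (r, j) = X (r, j) * X (i, l)
  diag {i r j l : ℕ} (hir : i < r) (hjl : j < l) (h : (r, l) ∈ S) :
    X (i, j) * X (r, l) = X (r, l) * X (i, j) + (q - q⁻¹) • (X (i, l) * X (r, j))
  eq_zero {s : ℕ × ℕ} (hs : s ∉ S) : X s = 0

namespace IsQuantumOn

lemma map (h : IsQuantumOn q S X) (f : A →ₐ[k] A') : IsQuantumOn q S (f ∘ X) where
  row i j l hjl := by simp only [Function.comp, ← map_mul, h.row i hjl, map_smul]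
  col j hir := by simp only [Function.comp, ← map_mul, h.col j hir, map_smul]
  anti hir hjl := by simp only [Function.comp, ← map_mul, h.anti hir hjl]
  diag hir hjl hS := by simp only [Function.comp, ← map_mul, h.diag hir hjl hS, map_add, map_smul]
  eq_zero hs := by simp only [Function.comp, h.eq_zero hs, map_zero]

lemma transpose (h : IsQuantumOn q S X) :
    IsQuantumOn q (Prod.swap ⁻¹' S) (X ∘ Prod.swap) where
  row i _ _ hjl := h.col i hjl
  col j hir := h.row j hir
  anti hir hjl := (h.anti hjl hir).symm
  diag hir hjl hS := by
    simp only [Function.comp, Prod.swap_prod_mk, h.diag hjl hir hS, h.anti hjl hir]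
  eq_zero hs := h.eq_zero hs

lemma scale (h : IsQuantumOn q S X) (α β : ℕ → k) :
    IsQuantumOn q S fun s => (α s.1 * β s.2) • X s where
  row i j l hjl := by
    simp only [smul_mul_smul_comm, h.row i hjl, smul_smul]
    congr 1; ring
  col {i r} j hir := by
    simp only [smul_mul_smul_comm, h.col j hir, smul_smul]
    congr 1; ring
  anti hir hjl := by
    simp only [smul_mul_smul_comm, h.anti hir hjl]
    congr 1; ring
  diag hir hjl hS := by
    simp only [smul_mul_smul_comm, h.diag hir hjl hS]
    module
  eq_zero hs := by rw [h.eq_zero hs, smul_zero]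

end IsQuantumOn

/-- The relations defining the universal algebra generated by a family as in `IsQuantumOn`. -/
inductive CellRel (q : k) (S : Set (ℕ × ℕ)) :
    FreeAlgebra k (ℕ × ℕ) → FreeAlgebra k (ℕ × ℕ) → Prop
  | row (i j l : ℕ) (hjl : j < l) :
      CellRel q S (FreeAlgebra.ι k (i, j) * FreeAlgebra.ι k (i, l))
        (q • (FreeAlgebra.ι k (i, l) * FreeAlgebra.ι k (i, j)))
  | col (i r j : ℕ) (hir : i < r) :
      CellRel q S (FreeAlgebra.ι k (i, j) * FreeAlgebra.ι k (r, j))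
        (q • (FreeAlgebra.ι k (r, j) * FreeAlgebra.ι k (i, j)))
  | anti (i r j l : ℕ) (hir : i < r) (hjl : j < l) :
      CellRel q S (FreeAlgebra.ι k (i, l) * FreeAlgebra.ι k (r, j))
        (FreeAlgebra.ι k (r, j) * FreeAlgebra.ι k (i, l))
  | diag (i r j l : ℕ) (hir : i < r) (hjl : j < l) (h : (r, l) ∈ S) :
      CellRel q S (FreeAlgebra.ι k (i, j) * FreeAlgebra.ι k (r, l))
        (FreeAlgebra.ι k (r, l) * FreeAlgebra.ι k (i, j) +
          (q - q⁻¹) • (FreeAlgebra.ι k (i, l) * FreeAlgebra.ι k (r, j)))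
  | zero (s : ℕ × ℕ) (hs : s ∉ S) : CellRel q S (FreeAlgebra.ι k s) 0

/-- The universal algebra generated by a family as in `IsQuantumOn`; adjoining the cells of a
square one at a time presents the quantum matrix algebra as an iterated Ore extension. -/
def CellAlgebra (q : k) (S : Set (ℕ × ℕ)) := RingQuot (CellRel q S)

namespace CellAlgebra

instance : Ring (CellAlgebra q S) := inferInstanceAs (Ring (RingQuot (CellRel q S)))

instance : Algebra k (CellAlgebra q S) := inferInstanceAs (Algebra k (RingQuot (CellRel q S)))

/-- The quotient map onto `CellAlgebra q S`. -/
def mk (q : k) (S : Set (ℕ × ℕ)) : FreeAlgebra k (ℕ × ℕ) →ₐ[k] CellAlgebra q S :=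
  RingQuot.mkAlgHom k (CellRel q S)

lemma mk_surjective : Function.Surjective (mk q S) :=
  RingQuot.mkAlgHom_surjective k (CellRel q S)

lemma mk_rel {f g : FreeAlgebra k (ℕ × ℕ)} (h : CellRel q S f g) : mk q S f = mk q S g :=
  RingQuot.mkAlgHom_rel k h

/-- The canonical generators of `CellAlgebra q S`. -/
def gen (q : k) (S : Set (ℕ × ℕ)) (s : ℕ × ℕ) : CellAlgebra q S :=
  mk q S (FreeAlgebra.ι k s)

lemma isQuantumOn_gen (q : k) (S : Set (ℕ × ℕ)) : IsQuantumOn q S (gen q S) where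
  row i j l hjl := by
    simpa only [gen, map_mul, map_smul] using mk_rel (CellRel.row (q := q) (S := S) i j l hjl)
  col {i r} j hir := by
    simpa only [gen, map_mul, map_smul] using mk_rel (CellRel.col (q := q) (S := S) i r j hir)
  anti {i r j l} hir hjl := by
    simpa only [gen, map_mul] using mk_rel (CellRel.anti (q := q) (S := S) i r j l hir hjl)
  diag {i r j l} hir hjl h := by
    simpa only [gen, map_mul, map_add, map_smul] using
      mk_rel (CellRel.diag (q := q) (S := S) i r j l hir hjl h)
  eq_zero {s} hs := by
    simpa only [gen, map_zero] using mk_rel (CellRel.zero (q := q) (S := S) s hs)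

/-- The universal property of `CellAlgebra q S`. -/
def lift (h : IsQuantumOn q S X) : CellAlgebra q S →ₐ[k] A :=
  RingQuot.liftAlgHom k ⟨FreeAlgebra.lift k X, by
    rintro _ _ (⟨i, j, l, hjl⟩ | ⟨i, r, j, hir⟩ | ⟨i, r, j, l, hir, hjl⟩ |
      ⟨i, r, j, l, hir, hjl, hS⟩ | ⟨s, hs⟩)
    · simpa using h.row i hjl
    · simpa using h.col j hir
    · simpa using h.anti hir hjl
    · simpa using h.diag hir hjl hS
    · simpa using h.eq_zero hs⟩

@[simp]
lemma lift_gen (h : IsQuantumOn q S X) (s : ℕ × ℕ) : lift h (gen q S s) = X s :=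
  (RingQuot.liftAlgHom_mkAlgHom_apply k _ _ _).trans (FreeAlgebra.lift_ι_apply X s)

@[elab_as_elim]
lemma induction {P : CellAlgebra q S → Prop} (algebraMap : ∀ c : k, P (algebraMap k _ c))
    (gen : ∀ s ∈ S, P (gen q S s)) (mul : ∀ a b, P a → P b → P (a * b))
    (add : ∀ a b, P a → P b → P (a + b)) (a : CellAlgebra q S) : P a := by
  obtain ⟨f, rfl⟩ := mk_surjective a
  induction f using FreeAlgebra.induction with
  | grade0 c => simpa using algebraMap c
  | grade1 s =>
    by_cases hs : s ∈ S
    · exact gen s hs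
    · have h0 : mk q S (FreeAlgebra.ι k s) = 0 := (isQuantumOn_gen q S).eq_zero hs
      simpa [h0] using algebraMap 0
  | mul a b ha hb => simpa using mul _ _ ha hb
  | add a b ha hb => simpa using add _ _ ha hb

lemma hom_ext {f g : CellAlgebra q S →ₐ[k] A} (h : ∀ s ∈ S, f (gen q S s) = g (gen q S s)) :
    f = g := by
  refine AlgHom.ext fun a => ?_
  induction a using CellAlgebra.induction with
  | algebraMap c => simp
  | gen s hs => exact h s hs
  | mul a b ha hb => simp [ha, hb]
  | add a b ha hb => simp [ha, hb]

/-- The automorphism `Xᵢⱼ ↦ αᵢ βⱼ Xᵢⱼ`. -/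
def scaleEquiv (q : k) (S : Set (ℕ × ℕ)) (α β : ℕ → kˣ) : CellAlgebra q S ≃ₐ[k] CellAlgebra q S :=
  AlgEquiv.ofAlgHom
    (lift ((isQuantumOn_gen q S).scale (fun i => α i) fun j => β j))
    (lift ((isQuantumOn_gen q S).scale (fun i => (α⁻¹) i) fun j => (β⁻¹) j))
    (hom_ext fun s _ => by simp [smul_smul, mul_mul_mul_comm])
    (hom_ext fun s _ => by simp [smul_smul, mul_mul_mul_comm (α s.1 : k) (β s.2)])

@[simp]
lemma scaleEquiv_gen (α β : ℕ → kˣ) (s : ℕ × ℕ) :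
    scaleEquiv q S α β (gen q S s) = (α s.1 * β s.2 : k) • gen q S s := by
  simp [scaleEquiv]

end CellAlgebra

end CellAlgebra

section Twist

variable {k : Type*} [Field k] {A : Type*} [Ring A] [Algebra k A] {q : k} {S : Set (ℕ × ℕ)}
  {X : ℕ × ℕ → A} {s : ℕ × ℕ}

/-- The cell `s` can be added to `S` so that the algebra on `insert s S` is an Ore extension of the
algebra on `S`. -/
structure IsOreStep (S : Set (ℕ × ℕ)) (s : ℕ × ℕ) : Prop where
  notMem {i j : ℕ} (hi : s.1 ≤ i) (hj : s.2 ≤ j) : (i, j) ∉ S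
  mem_of_mem {i j : ℕ} (hi : i < s.1) (hj : j < s.2) (h₁ : (i, s.2) ∈ S) (h₂ : (s.1, j) ∈ S) :
    (i, j) ∈ S
  mem {i j : ℕ} (hi₀ : 0 < i) (hi : i ≤ s.1) (hj₀ : 0 < j) (hj : j ≤ s.2) (hs : (i, j) ≠ s) :
    (i, j) ∈ S

lemma IsOreStep.transpose (h : IsOreStep S s) : IsOreStep (Prod.swap ⁻¹' S) s.swap where
  notMem hi hj := h.notMem hj hi
  mem_of_mem hi hj h₁ h₂ := h.mem_of_mem hj hi h₂ h₁
  mem hi₀ hi hj₀ hj hs := h.mem hj₀ hj hi₀ hi fun h' => hs (by rw [← h', Prod.swap_prod_mk])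

/-- The scalar `ρ` in the relation `Xₛ Xₜ = ρ Xₜ Xₛ + δ(Xₜ)`. -/
def stepScale (q : k) (s t : ℕ × ℕ) : k :=
  (if t.1 = s.1 then q⁻¹ else 1) * if t.2 = s.2 then q⁻¹ else 1

/-- The term `δ(Xₜ)` in the relation `Xₛ Xₜ = ρ Xₜ Xₛ + δ(Xₜ)`. -/
def stepDer (q : k) (s : ℕ × ℕ) (X : ℕ × ℕ → A) (t : ℕ × ℕ) : A :=
  if t.1 < s.1 ∧ t.2 < s.2 then (q⁻¹ - q) • (X (t.1, s.2) * X (s.1, t.2)) else 0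

/-- The value on `Xₜ Xᵤ` of the twisted derivation given by `stepDer` on the generators. -/
def stepLeibniz (q : k) (s : ℕ × ℕ) (X : ℕ × ℕ → A) (t u : ℕ × ℕ) : A :=
  stepScale q s t • X t * stepDer q s X u + stepDer q s X t * X u

lemma stepDer_map {A' : Type*} [Ring A'] [Algebra k A'] (f : A →ₐ[k] A') (t : ℕ × ℕ) :
    stepDer q s (f ∘ X) t = f (stepDer q s X t) := by
  simp only [stepDer, Function.comp]
  split_ifs <;> simp

lemma stepScale_transpose (t : ℕ × ℕ) : stepScale q s.swap t.swap = stepScale q s t := by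
  simp only [stepScale, Prod.fst_swap, Prod.snd_swap, mul_comm]

namespace IsQuantumOn

lemma stepDer_transpose (h : IsQuantumOn q S X) (t : ℕ × ℕ) :
    stepDer q s.swap (X ∘ Prod.swap) t.swap = stepDer q s X t := by
  simp only [stepDer, Prod.fst_swap, Prod.snd_swap, Function.comp, Prod.swap_prod_mk,
    and_comm (a := t.2 < s.2)]
  split_ifs with hlt
  · rw [h.anti hlt.1 hlt.2]
  · rfl

lemma stepLeibniz_transpose (h : IsQuantumOn q S X) (t u : ℕ × ℕ) :
    stepLeibniz q s.swap (X ∘ Prod.swap) t.swap u.swap = stepLeibniz q s X t u := by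
  simp only [stepLeibniz, h.stepDer_transpose, stepScale_transpose, Function.comp, Prod.swap_swap]

end IsQuantumOn

lemma mul_mul_eq_of_mul_eq {a b c : A} (h : a * b = c) (z : A) : a * (b * z) = c * z := by
  rw [← mul_assoc, h]

namespace IsQuantumOn

lemma stepLeibniz_row (h : IsQuantumOn q S X) (hs : IsOreStep S s) (hq : q ≠ 0) (i : ℕ) {j m : ℕ}
    (hjm : j < m) :
    stepLeibniz q s X (i, j) (i, m) = q • stepLeibniz q s X (i, m) (i, j) := by
  obtain ⟨r, l⟩ := s
  simp only [stepLeibniz, stepDer, stepScale]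
  rcases lt_or_ge i r with hir | hir
  swap
  · simp [hir.not_gt]
  rcases lt_or_ge j l with hjl | hjl
  swap
  · simp [hjl.not_gt, (hjl.trans hjm.le).not_gt]
  have hXjm := h.anti hir hjm
  rcases lt_trichotomy m l with hml | rfl | hlm
  · have hXj := h.row i hjl
    have hXm := h.row i hml
    have hd := h.diag hir hjm (hs.mem (by omega) le_rfl (by omega) hml.le (by simp [hml.ne]))
    simp only [hir, hjl, hml, hir.ne, hjl.ne, hml.ne, and_self, if_true, if_false, mul_one,
      one_smul, smul_mul_assoc, mul_smul_comm, mul_assoc, mul_mul_eq_of_mul_eq hXj, hd, hXjm,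
      mul_mul_eq_of_mul_eq hXm, mul_add, smul_add, smul_smul]
    match_scalars
    · field_simp
    · field_simp
      ring
  · simp only [hir, hjl, hir.ne, hjl.ne, lt_irrefl, and_self, and_false, if_true, if_false, one_mul,
      mul_zero, zero_add, smul_mul_assoc, mul_smul_comm, mul_assoc, ← hXjm, smul_smul,
      zero_mul, add_zero]
    match_scalars
    field_simp
  · have hX := h.row i hlm
    simp only [hir, hjl, hlm.not_gt, hir.ne, hlm.ne', and_self, and_false, if_true,
      if_false, mul_one, one_smul, smul_mul_assoc, mul_smul_comm, mul_assoc, zero_mul, ← hXjm,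
      mul_mul_eq_of_mul_eq hX, mul_zero, zero_add, add_zero, smul_comm q]

lemma stepLeibniz_col (h : IsQuantumOn q S X) (hs : IsOreStep S s) (hq : q ≠ 0) {i i' : ℕ} (j : ℕ)
    (hii' : i < i') :
    stepLeibniz q s X (i, j) (i', j) = q • stepLeibniz q s X (i', j) (i, j) := by
  rw [← h.stepLeibniz_transpose, ← h.stepLeibniz_transpose]
  exact h.transpose.stepLeibniz_row hs.transpose hq j hii'

lemma stepLeibniz_anti_of_lt (h : IsQuantumOn q S X) (hs : IsOreStep S s) (hq : q ≠ 0)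
    {i i' j j' : ℕ} (hii' : i < i') (hjj' : j < j') (hi' : i' < s.1) :
    stepLeibniz q s X (i, j') (i', j) = stepLeibniz q s X (i', j) (i, j') := by
  obtain ⟨r, l⟩ := s
  simp only [stepLeibniz, stepDer, stepScale] at hi' ⊢
  have hir := hii'.trans hi'
  rcases lt_or_ge j l with hjl | hjl
  swap
  · simp [hjl.not_gt, (hjl.trans hjj'.le).not_gt]
  have hc := h.anti hir hjj'
  rcases lt_trichotomy j' l with hjl' | rfl | hlj'
  · have h1 := h.diag hii' hjl' (hs.mem (by omega) hi'.le (by omega) le_rfl (by simp [hi'.ne]))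
    have h2 := (h.anti hii' hjl).symm
    have h3 := h.diag hi' hjj' (hs.mem (by omega) le_rfl (by omega) hjl'.le (by simp [hjl'.ne]))
    have h4 := h.anti hi' hjj'
    simp only [hir, hi', hjl, hjl', hir.ne, hi'.ne, hjl.ne, hjl'.ne, and_self, if_true, if_false,
      mul_one, one_smul, smul_mul_assoc, mul_smul_comm, mul_assoc, mul_mul_eq_of_mul_eq h1, hc,
      mul_mul_eq_of_mul_eq h2, h3, h4, mul_add, add_mul, smul_add]
    module
  · have h1 := h.col j' hii'
    have h2 := (h.anti hir hjl).symm
    simp only [hir, hi', hjl, hir.ne, hi'.ne, hjl.ne, and_self, and_false, if_true, if_false,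
      lt_irrefl, mul_one, one_mul, one_smul, smul_mul_assoc, mul_smul_comm, mul_assoc, h2, mul_zero,
      zero_mul, zero_add, add_zero, mul_mul_eq_of_mul_eq h1]
    match_scalars
    field_simp
  · have h1 := h.anti hii' hlj'
    simp only [hir, hi', hjl, hlj'.not_gt, hir.ne, hi'.ne, hjl.ne, hlj'.ne', and_self, and_false,
      if_true, if_false, mul_one, one_smul, smul_mul_assoc, mul_smul_comm, mul_assoc, hc, mul_zero,
      zero_mul, zero_add, add_zero, mul_mul_eq_of_mul_eq h1]

lemma stepLeibniz_diag_of_lt (h : IsQuantumOn q S X) (hs : IsOreStep S s) (hq : q ≠ 0)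
    {i i' j j' : ℕ} (hii' : i < i') (hjj' : j < j') (hi' : i' < s.1) (hmem : (i', j') ∈ S) :
    stepLeibniz q s X (i, j) (i', j') = stepLeibniz q s X (i', j') (i, j) +
      (q - q⁻¹) • stepLeibniz q s X (i, j') (i', j) := by
  obtain ⟨r, l⟩ := s
  simp only [stepLeibniz, stepDer, stepScale] at hi' ⊢
  have hir := hii'.trans hi'
  rcases lt_or_ge j l with hjl | hjl
  swap
  · simp [hjl.not_gt, (hjl.trans hjj'.le).not_gt]
  have hc := h.anti hir hjj'
  have hc' := h.anti hi' hjj'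
  rcases lt_trichotomy j' l with hjl' | rfl | hlj'
  · have h1 := h.diag hii' hjl (hs.mem (by omega) hi'.le (by omega) le_rfl (by simp [hi'.ne]))
    have h1' := h.diag hii' hjl' (hs.mem (by omega) hi'.le (by omega) le_rfl (by simp [hi'.ne]))
    have hS := hs.mem (j := j') (by omega) le_rfl (by omega) hjl'.le (by simp [hjl'.ne])
    have h2 := h.diag hir hjj' hS
    have h2' := h.diag hi' hjj' hS
    have h3 := (h.anti hii' hjl').symm
    simp only [hir, hi', hjl, hjl', hir.ne, hi'.ne, hjl.ne, hjl'.ne, and_self, if_true, if_false,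
      mul_one, one_smul, smul_mul_assoc, mul_smul_comm, mul_assoc, mul_mul_eq_of_mul_eq h1, hc, hc',
      mul_mul_eq_of_mul_eq h1', mul_mul_eq_of_mul_eq h3, h2, h2', mul_add, add_mul, smul_add]
    module
  · have h1 := h.col j' hii'
    have h2 := (h.anti hi' hjl).symm
    simp only [hir, hi', hjl, hir.ne, hi'.ne, hjl.ne, and_self, and_false, if_true, if_false,
      lt_irrefl, mul_one, one_mul, one_smul, smul_mul_assoc, mul_smul_comm, mul_assoc, h2,
      mul_zero, zero_mul, zero_add, add_zero, mul_mul_eq_of_mul_eq h1]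
    match_scalars
    field_simp
    ring
  · have h1 := h.diag hii' hlj' hmem
    simp only [hir, hi', hjl, hlj'.not_gt, hir.ne, hi'.ne, hjl.ne, hlj'.ne', and_self, and_false,
      if_true, if_false, mul_one, one_smul, smul_mul_assoc, mul_smul_comm, mul_assoc, ← hc',
      mul_zero, zero_mul, zero_add, add_zero, mul_mul_eq_of_mul_eq h1, add_mul, smul_add]
    module

lemma stepLeibniz_anti (h : IsQuantumOn q S X) (hs : IsOreStep S s) (hq : q ≠ 0)
    {i i' j j' : ℕ} (hii' : i < i') (hjj' : j < j') :
    stepLeibniz q s X (i, j') (i', j) = stepLeibniz q s X (i', j) (i, j') := by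
  rcases lt_or_ge i' s.1 with hi' | hi'
  · exact h.stepLeibniz_anti_of_lt hs hq hii' hjj' hi'
  rcases lt_or_ge j' s.2 with hj' | hj'
  · rw [← h.stepLeibniz_transpose, ← h.stepLeibniz_transpose]
    exact (h.transpose.stepLeibniz_anti_of_lt hs.transpose hq hjj' hii' hj').symm
  · simp [stepLeibniz, stepDer, hi'.not_gt, hj'.not_gt]

lemma stepLeibniz_diag (h : IsQuantumOn q S X) (hs : IsOreStep S s) (hq : q ≠ 0)
    {i i' j j' : ℕ} (hii' : i < i') (hjj' : j < j') (hmem : (i', j') ∈ S) :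
    stepLeibniz q s X (i, j) (i', j') = stepLeibniz q s X (i', j') (i, j) +
      (q - q⁻¹) • stepLeibniz q s X (i, j') (i', j) := by
  rcases lt_or_ge i' s.1 with hi' | hi'
  · exact h.stepLeibniz_diag_of_lt hs hq hii' hjj' hi' hmem
  rcases lt_or_ge j' s.2 with hj' | hj'
  · rw [h.stepLeibniz_anti hs hq hii' hjj', ← h.stepLeibniz_transpose, ← h.stepLeibniz_transpose,
      ← h.stepLeibniz_transpose]
    exact h.transpose.stepLeibniz_diag_of_lt hs.transpose hq hjj' hii' hj' hmem
  · exact absurd hmem (hs.notMem hi' hj')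

lemma stepDer_eq_zero (h : IsQuantumOn q S X) (hs : IsOreStep S s) {t : ℕ × ℕ} (ht : t ∉ S) :
    stepDer q s X t = 0 := by
  simp only [stepDer, ite_eq_right_iff]
  rintro ⟨h₁, h₂⟩
  by_cases hr : (t.1, s.2) ∈ S
  · rw [h.eq_zero (s := (s.1, t.2)) fun hl => ht (hs.mem_of_mem h₁ h₂ hr hl), mul_zero, smul_zero]
  · rw [h.eq_zero hr, zero_mul, smul_zero]

/-- The multiplication rule of these triangular matrices is the twisted Leibniz rule
`δ(ab) = σ(a) δ(b) + δ(a) b`. -/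
lemma stepMatrix (h : IsQuantumOn q S X) (hs : IsOreStep S s) (hq : q ≠ 0) :
    IsQuantumOn q S fun t => !![stepScale q s t • X t, stepDer q s X t; 0, X t] := by
  have hscale : IsQuantumOn q S fun t => stepScale q s t • X t :=
    h.scale (fun i => if i = s.1 then q⁻¹ else 1) fun j => if j = s.2 then q⁻¹ else 1
  have hmul (t u : ℕ × ℕ) : (!![stepScale q s t • X t, stepDer q s X t; 0, X t] *
      !![stepScale q s u • X u, stepDer q s X u; 0, X u] : Matrix (Fin 2) (Fin 2) A) =
      !![(stepScale q s t • X t) * (stepScale q s u • X u), stepLeibniz q s X t u;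
        0, X t * X u] := by
    simp [stepLeibniz, smul_comm (stepScale q s t)]
  refine ⟨fun i j l hjl => ?_, fun {i r} j hir => ?_, fun {i r j l} hir hjl => ?_,
    fun {i r j l} hir hjl hS => ?_, fun {t} ht => ?_⟩
  · rw [hmul, hmul, hscale.row i hjl, h.row i hjl, h.stepLeibniz_row hs hq i hjl]
    simp
  · rw [hmul, hmul, hscale.col j hir, h.col j hir, h.stepLeibniz_col hs hq j hir]
    simp
  · rw [hmul, hmul, hscale.anti hir hjl, h.anti hir hjl, h.stepLeibniz_anti hs hq hir hjl]
  · rw [hmul, hmul, hmul, hscale.diag hir hjl hS, h.diag hir hjl hS,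
      h.stepLeibniz_diag hs hq hir hjl hS]
    simp
  · rw [h.eq_zero ht, h.stepDer_eq_zero hs ht, smul_zero, ← Matrix.ext_iff]
    simp [Fin.forall_fin_two]

end IsQuantumOn

end Twist

section CellStep

variable {k : Type*} [Field k] {A : Type*} [Ring A] [Algebra k A] {q : k} {S : Set (ℕ × ℕ)}
  {X : ℕ × ℕ → A} {s : ℕ × ℕ} {x : A}

namespace IsQuantumOn

lemma mul_eq_of_isOreStep (h : IsQuantumOn q (insert s S) X) (hs : IsOreStep S s) (hq : q ≠ 0)
    {t : ℕ × ℕ} (ht : t ∈ S) :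
    X s * X t = stepScale q s t • (X t * X s) + stepDer q s X t := by
  obtain ⟨r, l⟩ := s
  obtain ⟨i, j⟩ := t
  have hlt : i < r ∨ j < l := by
    by_contra! hle
    exact hs.notMem hle.1 hle.2 ht
  simp only [stepScale, stepDer]
  rcases lt_trichotomy i r with hi | rfl | hi
  · rcases lt_trichotomy j l with hj | rfl | hj
    · rw [h.diag hi hj (Set.mem_insert _ _)]
      simp only [hi.ne, hj.ne, hi, hj, if_false, if_true, and_self, mul_one, one_smul]
      module
    · simp [h.col j hi, hi.ne, hq]
    · simp [h.anti hi hj, hi.ne, hj.ne', hj.not_gt]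
  · have hj := hlt.resolve_left (lt_irrefl i)
    simp [h.row i hj, hj.ne, hq]
  · have hj := hlt.resolve_left hi.not_gt
    simp [h.anti hi hj, hi.ne', hj.ne, hi.not_gt]

lemma erase (h : IsQuantumOn q (insert s S) X) (hs : IsOreStep S s) :
    IsQuantumOn q S (Function.update X s 0) where
  row i j l hjl := by
    by_cases h₁ : (i, j) = s <;> by_cases h₂ : (i, l) = s <;>
      simp [h₁, h₂, h.row i hjl]
  col {i r} j hir := by
    by_cases h₁ : (i, j) = s <;> by_cases h₂ : (r, j) = s <;>
      simp [h₁, h₂, h.col j hir]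
  anti {i r j l} hir hjl := by
    by_cases h₁ : (i, l) = s <;> by_cases h₂ : (r, j) = s <;>
      simp [h₁, h₂, h.anti hir hjl]
  diag {i r j l} hir hjl hS := by
    have hne (t : ℕ × ℕ) (h₁ : t.1 ≤ r) (h₂ : t.2 ≤ l) : t ≠ s := by
      rintro rfl
      exact hs.notMem h₁ h₂ hS
    rw [Function.update_of_ne (hne (i, j) hir.le hjl.le),
      Function.update_of_ne (hne (r, l) le_rfl le_rfl),
      Function.update_of_ne (hne (i, l) hir.le le_rfl),
      Function.update_of_ne (hne (r, j) le_rfl hjl.le), h.diag hir hjl (Set.mem_insert_of_mem _ hS)]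
  eq_zero {t} ht := by
    by_cases hts : t = s
    · rw [hts, Function.update_self]
    · rw [Function.update_of_ne hts, h.eq_zero (by simp [hts, ht])]

lemma update_diag (h : IsQuantumOn q S X) (hs : IsOreStep S s)
    (hx : ∀ t, x * X t = stepScale q s t • (X t * x) + stepDer q s X t) {i i' j m : ℕ}
    (hi : i < i') (hjm : j < m) (hS : (i', m) ∈ insert s S) :
    Function.update X s x (i, j) * Function.update X s x (i', m) =
      Function.update X s x (i', m) * Function.update X s x (i, j) +
        (q - q⁻¹) • (Function.update X s x (i, m) * Function.update X s x (i', j)) := by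
  obtain ⟨r, l⟩ := s
  have hne (t : ℕ × ℕ) (h₁ : t.1 ≤ i') (h₂ : t.2 ≤ m) (h₃ : t.1 < i' ∨ t.2 < m) :
      t ≠ (r, l) := by
    rintro rfl
    rcases hS with hS | hS
    · rw [← hS] at h₃
      simp at h₃
    · exact hs.notMem h₁ h₂ hS
  rw [Function.update_of_ne (hne (i, j) hi.le hjm.le (.inl hi)),
    Function.update_of_ne (hne (i, m) hi.le le_rfl (.inl hi)),
    Function.update_of_ne (hne (i', j) le_rfl hjm.le (.inr hjm))]
  rcases hS with hS | hS
  · obtain ⟨rfl, rfl⟩ := Prod.mk.inj hS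
    simp only [Function.update_self, hx (i, j), stepScale, stepDer, hi.ne, hi, hjm.ne, hjm,
      if_false, if_true, and_self, mul_one, one_smul]
    module
  · have hne' : (i', m) ≠ (r, l) := by
      rintro ⟨⟩
      exact hs.notMem le_rfl le_rfl hS
    rw [Function.update_of_ne hne', h.diag hi hjm hS]

lemma insert (h : IsQuantumOn q S X) (hs : IsOreStep S s) (hq : q ≠ 0)
    (hx : ∀ t ∈ S, x * X t = stepScale q s t • (X t * x) + stepDer q s X t) :
    IsQuantumOn q (insert s S) (Function.update X s x) := by
  have hx' (t : ℕ × ℕ) : x * X t = stepScale q s t • (X t * x) + stepDer q s X t := by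
    by_cases ht : t ∈ S
    · exact hx t ht
    · simp [h.eq_zero ht, h.stepDer_eq_zero hs ht]
  have h0 {i j : ℕ} (hi : s.1 ≤ i) (hj : s.2 ≤ j) : X (i, j) = 0 := h.eq_zero (hs.notMem hi hj)
  obtain ⟨r, l⟩ := s
  refine ⟨fun i {j m} hjm => ?_, fun {i i'} j hi => ?_, fun {i i' j m} hi hjm => ?_,
    fun {i i' j m} hi hjm hS => ?_, fun {t} ht => ?_⟩
  · rcases eq_or_ne (i, j) (r, l) with h₁ | h₁
    · obtain ⟨rfl, rfl⟩ := Prod.mk.inj h₁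
      simp [hjm.ne', h0 le_rfl hjm.le]
    rcases eq_or_ne (i, m) (r, l) with h₂ | h₂
    · obtain ⟨rfl, rfl⟩ := Prod.mk.inj h₂
      simp [hjm.ne, hx' (i, j), stepScale, stepDer, hq]
    · simp [h₁, h₂, h.row i hjm]
  · rcases eq_or_ne (i, j) (r, l) with h₁ | h₁
    · obtain ⟨rfl, rfl⟩ := Prod.mk.inj h₁
      simp [hi.ne', h0 hi.le le_rfl]
    rcases eq_or_ne (i', j) (r, l) with h₂ | h₂
    · obtain ⟨rfl, rfl⟩ := Prod.mk.inj h₂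
      simp [hi.ne, hx' (i, j), stepScale, stepDer, hq]
    · simp [h₁, h₂, h.col j hi]
  · rcases eq_or_ne (i, m) (r, l) with h₁ | h₁
    · obtain ⟨rfl, rfl⟩ := Prod.mk.inj h₁
      simp [hi.ne', hx' (i', j), stepScale, stepDer, hjm.ne, hi.not_gt]
    rcases eq_or_ne (i', j) (r, l) with h₂ | h₂
    · obtain ⟨rfl, rfl⟩ := Prod.mk.inj h₂
      simp [hi.ne, hx' (i, m), stepScale, stepDer, hjm.ne', hjm.not_gt]
    · simp [h₁, h₂, h.anti hi hjm]
  · exact h.update_diag hs hx' hi hjm hS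
  · rw [Function.update_of_ne fun hts => ht (.inl hts), h.eq_zero fun hts => ht (.inr hts)]

end IsQuantumOn

namespace CellAlgebra

/-- The automorphism `σ` of the Ore extension that adds the cell `s`. -/
def twist (S : Set (ℕ × ℕ)) (s : ℕ × ℕ) (hq : q ≠ 0) : CellAlgebra q S ≃ₐ[k] CellAlgebra q S :=
  scaleEquiv q S (fun i => if i = s.1 then (Units.mk0 q hq)⁻¹ else 1)
    fun j => if j = s.2 then (Units.mk0 q hq)⁻¹ else 1

@[simp]
lemma twist_gen (hq : q ≠ 0) (t : ℕ × ℕ) :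
    twist S s hq (gen q S t) = stepScale q s t • gen q S t := by
  rw [twist, scaleEquiv_gen, stepScale]
  split_ifs <;> simp

/-- The map `b ↦ !![σ b, δ b; 0, b]`, whose multiplicativity is the twisted Leibniz rule for
`δ`. -/
def twistHom (hs : IsOreStep S s) (hq : q ≠ 0) :
    CellAlgebra q S →ₐ[k] Matrix (Fin 2) (Fin 2) (CellAlgebra q S) :=
  lift ((isQuantumOn_gen q S).stepMatrix hs hq)

/-- The twisted derivation `δ` of the Ore extension that adds the cell `s`. -/
def twistDer (hs : IsOreStep S s) (hq : q ≠ 0) : CellAlgebra q S →ₗ[k] CellAlgebra q S :=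
  Matrix.entryLinearMap k _ 0 1 ∘ₗ (twistHom hs hq).toLinearMap

lemma twistHom_apply (hs : IsOreStep S s) (hq : q ≠ 0) (b : CellAlgebra q S) :
    twistHom hs hq b = !![twist S s hq b, twistDer hs hq b; 0, b] := by
  suffices h : twistHom hs hq b 0 0 = twist S s hq b ∧ twistHom hs hq b 1 0 = 0 ∧
      twistHom hs hq b 1 1 = b by
    rw [← h.1, Matrix.eta_fin_two (twistHom hs hq b), h.2.1, h.2.2]
    rfl
  induction b using CellAlgebra.induction with
  | algebraMap c => simp [Matrix.algebraMap_matrix_apply]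
  | gen t _ => simp [twistHom]
  | mul a b ha hb => simp [Matrix.mul_apply, ha, hb]
  | add a b ha hb => simp [ha, hb]

lemma twistDer_gen (hs : IsOreStep S s) (hq : q ≠ 0) (t : ℕ × ℕ) :
    twistDer hs hq (gen q S t) = stepDer q s (gen q S) t := by
  simp [twistDer, twistHom]

lemma twistDer_mul (hs : IsOreStep S s) (hq : q ≠ 0) (a b : CellAlgebra q S) :
    twistDer hs hq (a * b) = twist S s hq a * twistDer hs hq b + twistDer hs hq a * b := by
  have h := congrFun₂ (map_mul (twistHom hs hq) a b) 0 1
  simpa [twistHom_apply, Matrix.mul_apply] using h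

lemma twistDer_algebraMap (hs : IsOreStep S s) (hq : q ≠ 0) (c : k) :
    twistDer hs hq (algebraMap k _ c) = 0 := by
  simp [twistDer, Matrix.algebraMap_matrix_apply]

/-- The inclusion of the algebra on `S` into the algebra on `insert s S`. -/
def inclusion (q : k) (hs : IsOreStep S s) : CellAlgebra q S →ₐ[k] CellAlgebra q (insert s S) :=
  lift ((isQuantumOn_gen q (insert s S)).erase hs)

@[simp]
lemma inclusion_gen (hs : IsOreStep S s) (t : ℕ × ℕ) :
    inclusion q hs (gen q S t) = Function.update (gen q (insert s S)) s 0 t := by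
  simp [inclusion]

lemma inclusion_gen_of_ne (hs : IsOreStep S s) {t : ℕ × ℕ} (ht : t ≠ s) :
    inclusion q hs (gen q S t) = gen q (insert s S) t := by
  simp [ht]

lemma inclusion_stepDer (hs : IsOreStep S s) (t : ℕ × ℕ) :
    inclusion q hs (stepDer q s (gen q S) t) = stepDer q s (gen q (insert s S)) t := by
  simp only [stepDer]
  split_ifs with hlt
  · rw [map_smul, map_mul, inclusion_gen_of_ne hs (t := (t.1, s.2)) fun h => hlt.1.ne congr(($h).1),
      inclusion_gen_of_ne hs (t := (s.1, t.2)) fun h => hlt.2.ne congr(($h).2)]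
  · exact map_zero _

lemma gen_mul_inclusion (hs : IsOreStep S s) (hq : q ≠ 0) (b : CellAlgebra q S) :
    gen q (insert s S) s * inclusion q hs b =
      inclusion q hs (twist S s hq b) * gen q (insert s S) s +
        inclusion q hs (twistDer hs hq b) := by
  induction b using CellAlgebra.induction with
  | algebraMap c => simp [twistDer_algebraMap, Algebra.commutes]
  | gen t ht =>
    have hts : t ≠ s := by
      rintro rfl
      exact hs.notMem le_rfl le_rfl ht
    rw [twistDer_gen, inclusion_stepDer, twist_gen, map_smul, inclusion_gen_of_ne hs hts,
      (isQuantumOn_gen q (insert s S)).mul_eq_of_isOreStep hs hq ht, smul_mul_assoc]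
  | mul a b ha hb =>
    rw [map_mul, ← mul_assoc, ha, add_mul, mul_assoc, hb, twistDer_mul, map_mul, map_mul, map_add,
      map_mul, map_mul]
    noncomm_ring
  | add a b ha hb =>
    simp only [map_add, mul_add, add_mul, ha, hb]
    abel

/-- The action of the algebra on `insert s S` on the Ore extension of the algebra on `S`. -/
def representation (hs : IsOreStep S s) (hq : q ≠ 0) :
    CellAlgebra q (insert s S) →ₐ[k] Module.End k (CellAlgebra q S)[X] :=
  lift <| ((isQuantumOn_gen q S).map ((Algebra.lmul k (CellAlgebra q S)[X]).comp CAlgHom)).insert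
    hs hq (x := oreShift (twist S s hq).toLinearMap (twistDer hs hq)) fun t _ => by
      refine LinearMap.ext fun p => ?_
      have h := oreShift_C_mul (σ := (twist S s hq).toLinearMap) (map_mul (twist S s hq))
        (twistDer_mul hs hq) (gen q S t) p
      rw [stepDer_map, ← twistDer_gen hs hq]
      simpa [smul_mul_assoc, ← smul_C] using h

lemma representation_inclusion (hs : IsOreStep S s) (hq : q ≠ 0) (b : CellAlgebra q S) :
    representation hs hq (inclusion q hs b) = LinearMap.mulLeft k (C b) := by
  have h : (representation hs hq).comp (inclusion q hs) =
      (Algebra.lmul k (CellAlgebra q S)[X]).comp CAlgHom := by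
    refine hom_ext fun t ht => ?_
    have hts : t ≠ s := by
      rintro rfl
      exact hs.notMem le_rfl le_rfl ht
    simp [representation, hts]
  exact DFunLike.congr_fun h b

lemma surjective_oreEval_inclusion (hs : IsOreStep S s) (hq : q ≠ 0) :
    Function.Surjective (oreEval (inclusion q hs) (gen q (insert s S) s)) := by
  suffices h : ∀ a p, ∃ p', oreEval (inclusion q hs) (gen q (insert s S) s) p' =
      a * oreEval (inclusion q hs) (gen q (insert s S) s) p by
    intro a
    obtain ⟨p', hp'⟩ := h a (C 1)
    exact ⟨p', by rw [hp', oreEval_C, map_one, mul_one]⟩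
  intro a
  induction a using CellAlgebra.induction with
  | algebraMap c => exact fun p => ⟨c • p, by rw [map_smul, Algebra.smul_def]⟩
  | gen t ht =>
    intro p
    rcases eq_or_ne t s with rfl | hts
    · exact ⟨_, (mul_oreEval (σ := (twist S t hq).toLinearMap) (gen_mul_inclusion hs hq) p).symm⟩
    · exact ⟨C (gen q S t) * p, by rw [oreEval_C_mul, inclusion_gen_of_ne hs hts]⟩
  | mul a b ha hb =>
    intro p
    obtain ⟨p', hp'⟩ := hb p
    obtain ⟨p'', hp''⟩ := ha p'
    exact ⟨p'', by rw [hp'', hp', mul_assoc]⟩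
  | add a b ha hb =>
    intro p
    obtain ⟨p', hp'⟩ := ha p
    obtain ⟨p'', hp''⟩ := hb p
    exact ⟨p' + p'', by rw [map_add, hp', hp'', add_mul]⟩

theorem isOreExtension_inclusion (hs : IsOreStep S s) (hq : q ≠ 0) :
    IsOreExtension (inclusion q hs) (gen q (insert s S) s) (twist S s hq) (twistDer hs hq) :=
  .of_representation (gen_mul_inclusion hs hq) (by simpa using twistDer_algebraMap hs hq 1)
    (surjective_oreEval_inclusion hs hq) (representation hs hq) (representation_inclusion hs hq)
    (by simp [representation])

end CellAlgebra

end CellStep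

section Laplace

variable {k A B : Type*} [Field k] [Ring A] [Algebra k A] [Ring B] [Algebra k B] {q : k} {n : ℕ}

/-- The permutation with `0 ↦ j` that sends the other indices to the complement of `j` as `τ`
does. -/
def consPerm (j : Fin (n + 1)) (τ : Equiv.Perm (Fin n)) : Equiv.Perm (Fin (n + 1)) :=
  j.cycleRange⁻¹ * Equiv.Perm.decomposeFin.symm (0, τ)

@[simp]
lemma consPerm_zero (j : Fin (n + 1)) (τ : Equiv.Perm (Fin n)) : consPerm j τ 0 = j := by
  simp [consPerm, Equiv.Perm.inv_def]

@[simp]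
lemma consPerm_succ (j : Fin (n + 1)) (τ : Equiv.Perm (Fin n)) (i : Fin n) :
    consPerm j τ i.succ = j.succAbove (τ i) := by
  simp [consPerm, Equiv.Perm.inv_def]

lemma bijective_consPerm :
    Function.Bijective fun p : Fin (n + 1) × Equiv.Perm (Fin n) => consPerm p.1 p.2 := by
  refine (Fintype.bijective_iff_injective_and_card _).2 ⟨?_, ?_⟩
  · rintro ⟨j, τ⟩ ⟨j', τ'⟩ h
    obtain rfl : j = j' := by simpa using congr($h 0)
    refine Prod.ext rfl (Equiv.ext fun i => ?_)
    simpa using congr($h i.succ)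
  · simp [Fintype.card_perm, Nat.factorial_succ]

lemma invCount_eq_sum (σ : Equiv.Perm (Fin n)) :
    invCount σ = ∑ a, ∑ b, if a < b ∧ σ b < σ a then 1 else 0 := by
  rw [invCount, Finset.card_filter, Fintype.sum_prod_type]

lemma invCount_consPerm (j : Fin (n + 1)) (τ : Equiv.Perm (Fin n)) :
    invCount (consPerm j τ) = j + invCount τ := by
  have hj : ∑ b, (if j.succAbove (τ b) < j then 1 else 0) = (j : ℕ) := by
    simp_rw [Fin.succAbove_lt_iff_castSucc_lt]
    rw [Equiv.sum_comp τ fun b => if b.castSucc < j then 1 else 0, ← Finset.card_filter]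
    simp only [Fin.lt_def, Fin.val_castSucc]
    exact (Fin.card_filter_val_lt).trans (min_eq_right (Fin.is_le j))
  simp only [invCount_eq_sum, Fin.sum_univ_succ, consPerm_zero, consPerm_succ, Fin.succ_pos,
    Fin.succ_lt_succ_iff, Fin.succAbove_lt_succAbove_iff, hj, Fin.not_lt_zero, false_and,
    true_and, if_false, zero_add]

/-- The complementary quantum minor of the entry `(i, j)`, without a sign. -/
def cofactor (q : k) (X : Fin (n + 1) → Fin (n + 1) → A) (i j : Fin (n + 1)) : A :=
  qdet q fun a b => X (i.succAbove a) (j.succAbove b)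

lemma qdet_succ_row_zero (q : k) (X : Fin (n + 1) → Fin (n + 1) → A) :
    qdet q X = ∑ j : Fin (n + 1), (-q) ^ (j : ℕ) • (X 0 j * cofactor q X 0 j) := by
  rw [qdet, ← bijective_consPerm.sum_comp, Fintype.sum_prod_type]
  refine Finset.sum_congr rfl fun j _ => ?_
  simp [cofactor, qdet, Finset.mul_sum, Finset.smul_sum, invCount_consPerm, pow_add, smul_smul]

lemma map_qdet (f : A →ₐ[k] B) (X : Fin n → Fin n → A) :
    f (qdet q X) = qdet q fun i j => f (X i j) := by
  simp [qdet, map_list_prod, List.map_ofFn, Function.comp_def]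

open MulOpposite

/-- The matrix obtained by reversing the order of rows, of columns, and of multiplication. -/
def revOp (X : Fin n → Fin n → A) (i j : Fin n) : Aᵐᵒᵖ := op (X i.rev j.rev)

lemma invCount_permCongr_rev (σ : Equiv.Perm (Fin n)) :
    invCount (Fin.revPerm.permCongr σ) = invCount σ := by
  refine Finset.card_equiv ((Equiv.prodComm _ _).trans (Fin.revPerm.prodCongr Fin.revPerm)) ?_
  simp

lemma reverse_ofFn {α : Type*} (f : Fin n → α) :
    (List.ofFn f).reverse = List.ofFn fun i => f i.rev :=
  List.ext_getElem (by simp) fun i _ _ => by simp [Fin.rev, Nat.sub_sub, add_comm]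

lemma qdet_revOp (X : Fin n → Fin n → A) : qdet q (revOp X) = op (qdet q X) := by
  rw [qdet, qdet, ← Equiv.sum_comp Fin.revPerm.permCongr, ← coe_opLinearEquiv k, map_sum]
  refine Finset.sum_congr rfl fun σ _ => ?_
  simp only [invCount_permCongr_rev, map_smul, coe_opLinearEquiv, op_list_prod, List.map_ofFn,
    reverse_ofFn, Function.comp_def]
  simp [revOp]

lemma cofactor_revOp (X : Fin (n + 1) → Fin (n + 1) → A) (i j : Fin (n + 1)) :
    cofactor q (revOp X) i j = op (cofactor q X i.rev j.rev) := by
  rw [cofactor, cofactor, ← qdet_revOp]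
  simp only [revOp, Fin.rev_succAbove]
  rfl

lemma qdet_succ_row_last (X : Fin (n + 1) → Fin (n + 1) → A) :
    qdet q X =
      ∑ j : Fin (n + 1), (-q) ^ (j.rev : ℕ) • (cofactor q X (Fin.last n) j * X (Fin.last n) j) := by
  apply op_injective
  rw [← qdet_revOp, qdet_succ_row_zero, ← Equiv.sum_comp Fin.revPerm, ← coe_opLinearEquiv k,
    map_sum]
  simp [cofactor_revOp, revOp]

end Laplace

section RowRelations

variable {k A : Type*} [Field k] [Ring A] [Algebra k A] {q : k} {m n : ℕ}

lemma _root_.IsQMat.submatrix {m' n' : ℕ} {X : Fin m → Fin n → A} (hX : IsQMat q X)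
    {f : Fin m' → Fin m} {g : Fin n' → Fin n} (hf : StrictMono f) (hg : StrictMono g) :
    IsQMat q fun i j => X (f i) (g j) := by
  obtain ⟨row, col, anti, diag⟩ := hX
  exact ⟨fun i j l h => row _ _ _ (hg h), fun i r j h => col _ _ _ (hf h),
    fun i r j l h h' => anti _ _ _ _ (hf h) (hg h'),
    fun i r j l h h' => diag _ _ _ _ (hf h) (hg h')⟩

lemma _root_.IsQMat.transpose {X : Fin m → Fin n → A} (hX : IsQMat q X) :
    IsQMat q fun j i => X i j := by
  obtain ⟨row, col, anti, diag⟩ := hX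
  refine ⟨fun j i r h => col _ _ _ h, fun j l i h => row _ _ _ h,
    fun j l i r h h' => (anti _ _ _ _ h' h).symm, fun j l i r h h' => ?_⟩
  rw [diag _ _ _ _ h' h, anti _ _ _ _ h' h]

lemma _root_.IsQMat.revOp {X : Fin n → Fin n → A} (hX : IsQMat q X) : IsQMat q (revOp X) := by
  obtain ⟨row, col, anti, diag⟩ := hX
  simp only [IsQMat, QuantumMatrix.revOp, ← MulOpposite.op_mul, ← MulOpposite.op_smul,
    ← MulOpposite.op_sub, MulOpposite.op_inj]
  refine ⟨fun i j l h => row _ _ _ (Fin.rev_lt_rev.2 h),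
    fun i r j h => col _ _ _ (Fin.rev_lt_rev.2 h),
    fun i r j l h h' => anti _ _ _ _ (Fin.rev_lt_rev.2 h) (Fin.rev_lt_rev.2 h'),
    fun i r j l h h' => ?_⟩
  rw [diag _ _ _ _ (Fin.rev_lt_rev.2 h) (Fin.rev_lt_rev.2 h'),
    anti _ _ _ _ (Fin.rev_lt_rev.2 h) (Fin.rev_lt_rev.2 h')]

/-- The relations between two rows `v`, `w` that allow them to be exchanged in a quantum
determinant; in a quantum matrix every row satisfies them with respect to the rows below. -/
def IsQExchange (q : k) (v w : Fin n → A) : Prop :=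
  ∀ ⦃a b⦄, a < b → w a * v b - q • (w b * v a) = -q • (v a * w b - q • (v b * w a))

lemma _root_.IsQMat.isQExchange (hq : q ≠ 0) {X : Fin m → Fin n → A} (hX : IsQMat q X)
    {i r : Fin m} (hir : i < r) : IsQExchange q (X i) (X r) := by
  obtain ⟨-, -, anti, diag⟩ := hX
  intro a b hab
  rw [← anti i r a b hir hab, sub_eq_iff_eq_add.1 (diag i r a b hir hab)]
  match_scalars <;> field_simp
  ring

open Matrix (vecCons)

lemma sum_eq_sum_castSucc_add_sum_succ {M : Type*} [AddCommMonoid M] (b : Fin (n + 1))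
    (f : Fin (n + 2) → M) :
    ∑ j, f j = ∑ a with a ≤ b, f a.castSucc + ∑ a with b ≤ a, f a.succ := by
  have h : ∀ a, f (b.castSucc.succAbove a) =
      (if a < b then f a.castSucc else 0) + if b ≤ a then f a.succ else 0 := fun a => by
    rcases lt_or_ge a b with hab | hab
    · simp [hab, hab.not_ge, Fin.succAbove_castSucc_of_lt]
    · simp [hab, hab.not_gt, Fin.succAbove_castSucc_of_le]
  have h' : Finset.univ.filter (· ≤ b) = insert b (Finset.univ.filter (· < b)) := by
    ext a; simp [le_iff_eq_or_lt]
  rw [Fin.sum_univ_succAbove f b.castSucc, h', Finset.sum_insert (by simp), add_assoc]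
  simp [h, Finset.sum_add_distrib, Finset.sum_filter]

lemma qdet_vecCons_vecCons (v w : Fin (n + 2) → A) (M : Fin n → Fin (n + 2) → A) :
    qdet q (vecCons v (vecCons w M)) = ∑ b : Fin (n + 1), ∑ a with a ≤ b, (-q) ^ (a + b : ℕ) •
      ((v a.castSucc * w b.succ - q • (v b.succ * w a.castSucc)) *
        qdet q fun c d => M c (a.castSucc.succAbove (b.succAbove d))) := by
  set F : Fin (n + 2) → Fin (n + 1) → A := fun j l => (-q) ^ (j + l : ℕ) •
    (v j * w (j.succAbove l) * qdet q fun c d => M c (j.succAbove (l.succAbove d))) with hF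
  have hexp : qdet q (vecCons v (vecCons w M)) = ∑ l, ∑ j, F j l := by
    rw [Finset.sum_comm, qdet_succ_row_zero]
    simp [cofactor, qdet_succ_row_zero, Finset.mul_sum, Finset.smul_sum, hF, smul_smul, pow_add,
      mul_assoc]
  have hsucc : ∑ l, ∑ a with l ≤ a, F a.succ l = ∑ b, ∑ a with a ≤ b, F b.succ a := by
    simp_rw [Finset.sum_filter]
    exact Finset.sum_comm
  rw [hexp, Finset.sum_congr rfl fun l _ => sum_eq_sum_castSucc_add_sum_succ l fun j => F j l,
    Finset.sum_add_distrib, hsucc, ← Finset.sum_add_distrib]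
  refine Finset.sum_congr rfl fun b _ => ?_
  rw [← Finset.sum_add_distrib]
  refine Finset.sum_congr rfl fun a ha => ?_
  have hab : a ≤ b := (Finset.mem_filter.1 ha).2
  have hminor (d : Fin n) :
      b.succ.succAbove (a.succAbove d) = a.castSucc.succAbove (b.succAbove d) := by
    rw [← Fin.succAbove_succAbove_succAbove_predAbove, Fin.succAbove_succ_of_le _ _ hab,
      Fin.predAbove_succ_of_le _ _ hab]
  simp only [hF, hminor, Fin.succAbove_castSucc_of_le _ _ hab, Fin.succAbove_succ_of_le _ _ hab,
    sub_mul, smul_sub, smul_mul_assoc, smul_smul, Fin.val_succ, Fin.val_castSucc]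
  module

lemma qdet_vecCons_comm {v w : Fin (n + 2) → A} (h : IsQExchange q v w)
    (M : Fin n → Fin (n + 2) → A) :
    qdet q (vecCons w (vecCons v M)) = -q • qdet q (vecCons v (vecCons w M)) := by
  simp only [qdet_vecCons_vecCons, Finset.smul_sum]
  refine Finset.sum_congr rfl fun b _ => Finset.sum_congr rfl fun a ha => ?_
  rw [h (Fin.castSucc_lt_succ_iff.2 (Finset.mem_filter.1 ha).2), smul_mul_assoc, smul_comm]

lemma qdet_vecCons_self {v : Fin (n + 2) → A} (hv : ∀ ⦃a b⦄, a < b → v a * v b = q • (v b * v a))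
    (M : Fin n → Fin (n + 2) → A) : qdet q (vecCons v (vecCons v M)) = 0 := by
  rw [qdet_vecCons_vecCons]
  refine Finset.sum_eq_zero fun b _ => Finset.sum_eq_zero fun a ha => ?_
  rw [hv (Fin.castSucc_lt_succ_iff.2 (Finset.mem_filter.1 ha).2), sub_self, zero_mul, smul_zero]

lemma IsQExchange.comp {v w : Fin n → A} (h : IsQExchange q v w) {f : Fin m → Fin n}
    (hf : StrictMono f) : IsQExchange q (fun j => v (f j)) fun j => w (f j) :=
  fun _ _ hab => h (hf hab)

lemma qdet_vecCons (v : Fin (n + 1) → A) (M : Fin n → Fin (n + 1) → A) :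
    qdet q (vecCons v M) =
      ∑ j : Fin (n + 1), (-q) ^ (j : ℕ) • (v j * qdet q fun a b => M a (j.succAbove b)) :=
  qdet_succ_row_zero q _

lemma vecCons_comp_col {α : Type*} (v : Fin n → α) {t : ℕ} (M : Fin t → Fin n → α)
    (f : Fin m → Fin n) :
    (fun a b => vecCons v M a (f b)) = vecCons (fun b => v (f b)) fun a b => M a (f b) := by
  ext a
  cases a using Fin.cases <;> rfl

lemma qdet_vecCons_succAbove {n : ℕ} (X : Fin (n + 1) → Fin (n + 1) → A) (i : Fin (n + 1))
    (h : ∀ r < i, IsQExchange q (X r) (X i)) :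
    qdet q (vecCons (X i) fun a => X (i.succAbove a)) = (-q) ^ (i : ℕ) • qdet q X := by
  cases i using Fin.cases with
  | zero =>
    rw [Fin.val_zero, pow_zero, one_smul]
    exact congrArg (qdet q) (Matrix.cons_head_tail X)
  | succ i =>
    cases n with
    | zero => exact i.elim0
    | succ n =>
      have hX : (fun a => X (i.succ.succAbove a)) =
          vecCons (X 0) fun a => X (i.succAbove a).succ := by
        ext a b
        cases a using Fin.cases <;> simp
      rw [hX, qdet_vecCons_comm (h 0 i.succ_pos), qdet_vecCons, qdet_succ_row_zero q X,
        Finset.smul_sum, Finset.smul_sum]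
      refine Finset.sum_congr rfl fun j _ => ?_
      rw [vecCons_comp_col, qdet_vecCons_succAbove (fun a b => X a.succ (j.succAbove b)) i
        fun r hr => (h r.succ (Fin.succ_lt_succ_iff.2 hr)).comp (Fin.strictMono_succAbove j)]
      simp only [cofactor, Fin.zero_succAbove, mul_smul_comm, Fin.val_succ, pow_succ']
      module

lemma qdet_vecCons_apply {n : ℕ} (X : Fin n → Fin (n + 1) → A) (p : Fin n)
    (hp : ∀ ⦃a b⦄, a < b → X p a * X p b = q • (X p b * X p a))
    (h : ∀ r < p, IsQExchange q (X r) (X p)) : qdet q (vecCons (X p) X) = 0 := by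
  cases n with
  | zero => exact p.elim0
  | succ n =>
    have hX : vecCons (X p) X = vecCons (X p) (vecCons (X 0) fun a => X a.succ) :=
      congrArg _ (Matrix.cons_head_tail X).symm
    cases p using Fin.cases with
    | zero => rw [hX, qdet_vecCons_self hp]
    | succ p =>
      rw [hX, qdet_vecCons_comm (h 0 p.succ_pos), qdet_vecCons]
      refine smul_eq_zero_of_right _ (Finset.sum_eq_zero fun j _ => ?_)
      rw [vecCons_comp_col, qdet_vecCons_apply (fun a b => X a.succ (j.succAbove b)) p
        (fun a b hab => hp (Fin.strictMono_succAbove j hab)) fun r hr =>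
          (h r.succ (Fin.succ_lt_succ_iff.2 hr)).comp (Fin.strictMono_succAbove j),
        mul_zero, smul_zero]

lemma _root_.IsQMat.sum_mul_cofactor (hq : q ≠ 0) {X : Fin (n + 1) → Fin (n + 1) → A}
    (hX : IsQMat q X) (l i : Fin (n + 1)) :
    ∑ j : Fin (n + 1), (-q) ^ (j : ℕ) • (X l j * cofactor q X i j) =
      if l = i then (-q) ^ (i : ℕ) • qdet q X else 0 := by
  have hrow := qdet_vecCons (q := q) (X l) fun a => X (i.succAbove a)
  simp only [cofactor, ← hrow]
  split_ifs with hli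
  · rw [hli, qdet_vecCons_succAbove X i fun r hr => hX.isQExchange hq hr]
  · obtain ⟨p, rfl⟩ := Fin.exists_succAbove_eq hli
    exact qdet_vecCons_apply (fun a => X (i.succAbove a)) p (fun a b hab => hX.1 _ _ _ hab)
      fun r hr => hX.isQExchange hq (Fin.strictMono_succAbove i hr)

end RowRelations

section Central

variable {k A : Type*} [Field k] [Ring A] [Algebra k A] {q : k} {n : ℕ}

lemma qdet_succ_column_zero (X : Fin (n + 1) → Fin (n + 1) → A)
    (hX : ∀ i r j l, i < r → j < l → X i l * X r j = X r j * X i l) :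
    qdet q X = ∑ i : Fin (n + 1), (-q) ^ (i : ℕ) • (X i 0 * cofactor q X i 0) := by
  induction n with
  | zero => simp [qdet_succ_row_zero]
  | succ n ih =>
    have hcol (j : Fin (n + 1)) : cofactor q X 0 j.succ =
        ∑ i : Fin (n + 1), (-q) ^ (i : ℕ) • (X i.succ 0 * qdet q fun a b =>
          X (i.succAbove a).succ (j.succAbove b).succ) := by
      rw [cofactor, ih _ fun i r j l hir hjl => hX _ _ _ _ (Fin.strictMono_succAbove _ hir)
        (Fin.strictMono_succAbove _ hjl)]
      simp [cofactor]
    have hrow (i : Fin (n + 1)) : cofactor q X i.succ 0 =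
        ∑ j : Fin (n + 1), (-q) ^ (j : ℕ) • (X 0 j.succ * qdet q fun a b =>
          X (i.succAbove a).succ (j.succAbove b).succ) := by
      rw [cofactor, qdet_succ_row_zero]
      simp [cofactor]
    rw [qdet_succ_row_zero, Fin.sum_univ_succ (n := n + 1), Fin.sum_univ_succ (n := n + 1)]
    simp only [hcol, hrow, Finset.mul_sum, Finset.smul_sum, mul_smul_comm, smul_smul]
    refine congrArg _ (Finset.sum_comm.trans ?_)
    refine Finset.sum_congr rfl fun i _ => Finset.sum_congr rfl fun j _ => ?_
    rw [← mul_assoc, hX 0 i.succ 0 j.succ i.succ_pos j.succ_pos, mul_assoc, ← pow_add, ← pow_add,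
      Fin.val_succ, Fin.val_succ, add_right_comm, add_comm (j : ℕ), add_right_comm]

lemma qdet_transpose (X : Fin n → Fin n → A)
    (hX : ∀ i r j l, i < r → j < l → X i l * X r j = X r j * X i l) :
    (qdet q fun j i => X i j) = qdet q X := by
  induction n with
  | zero => simp [qdet]
  | succ n ih =>
    rw [qdet_succ_row_zero, qdet_succ_column_zero X hX]
    refine Finset.sum_congr rfl fun j _ => ?_
    congr 2
    exact ih _ fun i r j l hir hjl => hX _ _ _ _ (Fin.strictMono_succAbove _ hir)
        (Fin.strictMono_succAbove _ hjl)

lemma _root_.IsQMat.sum_cofactor_mul (hq : q ≠ 0) {X : Fin (n + 1) → Fin (n + 1) → A}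
    (hX : IsQMat q X) (j l : Fin (n + 1)) :
    ∑ i : Fin (n + 1), (-q) ^ (i.rev : ℕ) • (cofactor q X i j * X i l) =
      if l = j then (-q) ^ (j.rev : ℕ) • qdet q X else 0 := by
  have hY := IsQMat.sum_mul_cofactor hq hX.transpose.revOp l.rev j.rev
  have hcof (i : Fin (n + 1)) :
      cofactor q (revOp fun a b => X b a) j.rev i = MulOpposite.op (cofactor q X i.rev j) := by
    rw [cofactor_revOp, Fin.rev_rev]
    exact congrArg _ (qdet_transpose _ (hX.submatrix (Fin.strictMono_succAbove i.rev)
      (Fin.strictMono_succAbove j)).2.2.1)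
  apply MulOpposite.op_injective
  rw [← Equiv.sum_comp Fin.revPerm]
  simpa [hcof, qdet_revOp, qdet_transpose X hX.2.2.1, revOp, apply_ite, Fin.rev_inj] using hY

theorem _root_.IsQMat.commute_qdet (hq : q ≠ 0) {X : Fin n → Fin n → A} (hX : IsQMat q X)
    (i j : Fin n) : Commute (qdet q X) (X i j) := by
  cases n with
  | zero => exact i.elim0
  | succ n =>
    have hpow (a : Fin (n + 1)) : (-q) ^ (a.rev : ℕ) * (-q) ^ (a : ℕ) = (-q) ^ n := by
      rw [← pow_add]; congr 1; simp [Fin.rev]; omega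
    have hrow : ∑ a : Fin (n + 1), ∑ b : Fin (n + 1), ((-q) ^ (a.rev : ℕ) * (-q) ^ (b : ℕ)) •
        (X i b * cofactor q X a b * X a j) = (-q) ^ n • (qdet q X * X i j) := by
      calc _ = ∑ a : Fin (n + 1), (-q) ^ (a.rev : ℕ) •
            ((∑ b : Fin (n + 1), (-q) ^ (b : ℕ) • (X i b * cofactor q X a b)) * X a j) := by
            simp only [Finset.sum_mul, Finset.smul_sum, smul_mul_assoc, smul_smul]
        _ = _ := by simp [hX.sum_mul_cofactor hq, smul_smul, hpow, -Fin.val_rev]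
    have hcol : ∑ a : Fin (n + 1), ∑ b : Fin (n + 1), ((-q) ^ (a.rev : ℕ) * (-q) ^ (b : ℕ)) •
        (X i b * cofactor q X a b * X a j) = (-q) ^ n • (X i j * qdet q X) := by
      calc _ = ∑ b : Fin (n + 1), (-q) ^ (b : ℕ) •
            (X i b * ∑ a : Fin (n + 1), (-q) ^ (a.rev : ℕ) • (cofactor q X a b * X a j)) := by
            rw [Finset.sum_comm]
            simp only [Finset.mul_sum, Finset.smul_sum, mul_smul_comm, smul_smul, mul_assoc,
              mul_comm]
        _ = _ := by
          simp [hX.sum_cofactor_mul hq, smul_smul, mul_comm ((-q) ^ (j : ℕ)), hpow, -Fin.val_rev]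
    exact smul_right_injective A (pow_ne_zero n (neg_ne_zero.2 hq)) (hrow.symm.trans hcol)

end Central

section Border

variable {k A : Type*} [Field k] [Ring A] [Algebra k A] {q : k} {m n : ℕ}

lemma qdet_eq_add_of_eq_off_corner {X Y : Fin (n + 1) → Fin (n + 1) → A}
    (h : ∀ i j, (i, j) ≠ (Fin.last n, Fin.last n) → X i j = Y i j) :
    qdet q X = qdet q (fun i j : Fin n => X i.castSucc j.castSucc) *
      (X (Fin.last n) (Fin.last n) - Y (Fin.last n) (Fin.last n)) + qdet q Y := by
  have hcof (j : Fin (n + 1)) : cofactor q X (Fin.last n) j = cofactor q Y (Fin.last n) j := by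
    simp only [cofactor, Fin.succAbove_last]
    congr 1
    ext a b
    exact h _ _ fun hab => (Fin.castSucc_lt_last a).ne (Prod.ext_iff.1 hab).1
  have hlast : cofactor q X (Fin.last n) (Fin.last n) =
      qdet q fun i j : Fin n => X i.castSucc j.castSucc := by
    simp only [cofactor, Fin.succAbove_last]
  have hrow (j : Fin n) : X (Fin.last n) j.castSucc = Y (Fin.last n) j.castSucc :=
    h _ _ fun hj => (Fin.castSucc_lt_last j).ne (Prod.ext_iff.1 hj).2
  rw [qdet_succ_row_last, qdet_succ_row_last, Fin.sum_univ_castSucc, Fin.sum_univ_castSucc,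
    ← hlast]
  simp only [hcof, hrow, Fin.rev_last, Fin.val_zero, pow_zero, one_smul, mul_sub]
  abel

lemma qdet_eq_zero_of_row_last {X : Fin (n + 1) → Fin (n + 1) → A}
    (h : ∀ j, X (Fin.last n) j = 0) : qdet q X = 0 := by
  simp [qdet_succ_row_last, h]

lemma _root_.IsQMat.map {B : Type*} [Ring B] [Algebra k B] {X : Fin m → Fin n → A}
    (hX : IsQMat q X) (f : A →ₐ[k] B) : IsQMat q fun i j => f (X i j) := by
  obtain ⟨row, col, anti, diag⟩ := hX
  simp only [IsQMat, ← map_mul, ← map_smul, ← map_sub]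
  exact ⟨fun _ _ _ h => congrArg f (row _ _ _ h), fun _ _ _ h => congrArg f (col _ _ _ h),
    fun _ _ _ _ h h' => congrArg f (anti _ _ _ _ h h'),
    fun _ _ _ _ h h' => congrArg f (diag _ _ _ _ h h')⟩

lemma _root_.IsQMat.mul_col {X : Fin m → Fin n → A} (hX : IsQMat q X) {c : Fin n → A}
    (hc : ∀ j l, Commute (c j) (c l)) (hcX : ∀ i j l, Commute (c l) (X i j)) :
    IsQMat q fun i j => c j * X i j := by
  have hmul (i r : Fin m) (j l : Fin n) :
      c j * X i j * (c l * X r l) = c j * c l * (X i j * X r l) :=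
    (hcX i j l).symm.mul_mul_mul_comm _ _
  obtain ⟨row, col, anti, diag⟩ := hX
  refine ⟨fun i j l h => ?_, fun i r j h => ?_, fun i r j l h h' => ?_, fun i r j l h h' => ?_⟩
  · rw [hmul, hmul, (hc j l).eq, row i j l h, mul_smul_comm]
  · rw [hmul, hmul, col i r j h, mul_smul_comm]
  · rw [hmul, hmul, (hc l j).eq, anti i r j l h h']
  · rw [hmul, hmul, hmul, (hc l j).eq, ← mul_sub, diag i r j l h h', mul_smul_comm]

/-- The matrix `X` extended by a bottom row `(0, …, 0, y)`. -/
def snocRow (X : Fin m → Fin (n + 1) → A) (y : A) : Fin (m + 1) → Fin (n + 1) → A :=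
  Fin.snoc (α := fun _ => Fin (n + 1) → A) X (Fin.snoc 0 y)

lemma _root_.IsQMat.snocRow {X : Fin m → Fin (n + 1) → A} (hX : IsQMat q X) {y : A}
    (hy : ∀ i (j : Fin n), Commute (X i j.castSucc) y)
    (hlast : ∀ i, X i (Fin.last n) * y = q • (y * X i (Fin.last n))) :
    IsQMat q (snocRow X y) := by
  obtain ⟨row, col, anti, diag⟩ := hX
  have hlt {t : ℕ} {a b : Fin (t + 1)} (h : a < b) : ∃ a' : Fin t, a = a'.castSucc :=
    Fin.exists_castSucc_eq.2 (Fin.ne_last_of_lt h) |>.imp fun _ => Eq.symm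
  unfold QuantumMatrix.snocRow
  refine ⟨fun i j l h => ?_, fun i r j h => ?_, fun i r j l h h' => ?_, fun i r j l h h' => ?_⟩
  · obtain ⟨j, rfl⟩ := hlt h
    cases i using Fin.lastCases with
    | last => simp
    | cast i => simpa using row i _ _ h
  · obtain ⟨i, rfl⟩ := hlt h
    cases r using Fin.lastCases with
    | last => cases j using Fin.lastCases <;> simp [hlast]
    | cast r => simpa using col i r j (by simpa using h)
  · obtain ⟨i, rfl⟩ := hlt h
    obtain ⟨j, rfl⟩ := hlt h'
    cases r using Fin.lastCases with
    | last => simp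
    | cast r => simpa using anti i r _ _ (by simpa using h) h'
  · obtain ⟨i, rfl⟩ := hlt h
    obtain ⟨j, rfl⟩ := hlt h'
    cases r using Fin.lastCases with
    | last => cases l using Fin.lastCases <;> simp [(hy _ _).eq]
    | cast r => simpa using diag i r _ _ (by simpa using h) h'

lemma qdet_snocRow (X : Fin n → Fin (n + 1) → A) (y : A) :
    qdet q (snocRow X y) = qdet q (fun i j : Fin n => X i j.castSucc) * y := by
  rw [qdet_succ_row_last, Finset.sum_eq_single (Fin.last n)]
  · simp [cofactor, snocRow]
  · intro j _ hj
    obtain ⟨j, rfl⟩ := Fin.exists_castSucc_eq.2 hj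
    simp [snocRow]
  · simp

open Matrix

/-- Over `M₂(A)`, multiplying the last column of `X` by `diag(q, 1)` and adjoining the bottom row
`(0, …, 0, E₀₁)` gives a quantum matrix, whose determinant is central. -/
lemma _root_.IsQMat.qdet_mul_col_last (hq : q ≠ 0) {X : Fin n → Fin (n + 1) → A} (hX : IsQMat q X)
    (i : Fin n) :
    qdet q (fun a b : Fin n => X a b.castSucc) * X i (Fin.last n) =
      q • (X i (Fin.last n) * qdet q fun a b : Fin n => X a b.castSucc) := by
  let φ : A →ₐ[k] Matrix (Fin 2) (Fin 2) A := scalarAlgHom (Fin 2) k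
  let c : Fin (n + 1) → Matrix (Fin 2) (Fin 2) A := Fin.snoc 1 !![q • 1, 0; 0, 1]
  let e : Matrix (Fin 2) (Fin 2) A := !![0, 1; 0, 0]
  have hφ (a : A) : φ a = !![a, 0; 0, a] := by
    ext i j; fin_cases i <;> fin_cases j <;> simp [φ]
  have hcφ (l : Fin (n + 1)) (a : A) : Commute (c l) (φ a) := by
    cases l using Fin.lastCases <;> simp [commute_iff_eq, c, hφ]
  have hcc (j l : Fin (n + 1)) : Commute (c j) (c l) := by
    cases j using Fin.lastCases <;> cases l using Fin.lastCases <;> simp [c]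
  have hφe (a : A) : Commute (φ a) e := by simp [commute_iff_eq, e, hφ]
  have hY := ((hX.map φ).mul_col hcc fun i j l => hcφ l (X i j)).snocRow (y := e)
    (fun i j => by simpa [c] using hφe (X i j.castSucc))
    (fun i => by simp [c, e, hφ])
  have hdet : qdet q (snocRow (fun a b => c b * φ (X a b)) e) =
      φ (qdet q fun a b : Fin n => X a b.castSucc) * e := by
    rw [qdet_snocRow, map_qdet]
    simp [c]
  have hcomm := congr($((hY.commute_qdet hq i.castSucc (Fin.last n)).eq) 0 1)
  rw [hdet] at hcomm
  simpa [snocRow, c, hφ, e] using hcomm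

end Border

section Reachable

variable {k : Type*} [Field k] {q : k} {S T U : Set (ℕ × ℕ)}

/-- `S` arises from `T` by successive addition of cells, each giving an Ore extension. -/
def IsOreReachable : Set (ℕ × ℕ) → Set (ℕ × ℕ) → Prop :=
  Relation.ReflTransGen fun T S => ∃ s, IsOreStep T s ∧ S = insert s T

namespace IsOreReachable

lemma refl (S : Set (ℕ × ℕ)) : IsOreReachable S S := Relation.ReflTransGen.refl

lemma trans (h : IsOreReachable S T) (h' : IsOreReachable T U) : IsOreReachable S U :=
  Relation.ReflTransGen.trans h h'

lemma exists_algHom (h : IsOreReachable T S) (hq : q ≠ 0) :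
    ∃ f : CellAlgebra q T →ₐ[k] CellAlgebra q S, Function.Injective f ∧
      (∀ t ∈ T, f (.gen q T t) = .gen q S t) ∧
      ∀ d, IsNormalPrime d →
        (∀ s ∉ T, ∃ c : k, c ≠ 0 ∧ .gen q S s * f d = c • (f d * .gen q S s)) →
        IsNormalPrime (f d) := by
  induction h using Relation.ReflTransGen.head_induction_on with
  | refl => exact ⟨.id k _, Function.injective_id, fun _ _ => rfl, fun d hd _ => hd⟩
  | @head T _ hstep hreach ih =>
    obtain ⟨s, hs, rfl⟩ := hstep
    obtain ⟨f, hf, hgen, hprime⟩ := ih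
    have hext := CellAlgebra.isOreExtension_inclusion hs hq
    have hsT : s ∉ T := hs.notMem le_rfl le_rfl
    refine ⟨f.comp (CellAlgebra.inclusion q hs), hf.comp hext.injective, fun t ht => ?_,
      fun d hd hcomm => ?_⟩
    · rw [AlgHom.comp_apply, CellAlgebra.inclusion_gen_of_ne hs (ne_of_mem_of_not_mem ht hsT),
        hgen t (.inr ht)]
    · obtain ⟨c, hc, hcs⟩ := hcomm s hsT
      refine hprime _ (hext.isNormalPrime_map hd hc (hf ?_)) fun t ht =>
        hcomm t fun h => ht (.inr h)
      simpa [hgen s (.inl rfl)] using hcs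

end IsOreReachable

lemma CellAlgebra.bijective_algebraMap_empty :
    Function.Bijective (algebraMap k (CellAlgebra q ∅)) := by
  have h0 : IsQuantumOn q ∅ (fun _ => (0 : k)) := by constructor <;> simp
  refine ⟨Function.LeftInverse.injective (g := lift h0) fun c => by simp, fun a => ?_⟩
  induction a using CellAlgebra.induction with
  | algebraMap c => exact ⟨c, rfl⟩
  | gen s hs => exact hs.elim
  | mul _ _ ha hb =>
    obtain ⟨⟨c, rfl⟩, c', rfl⟩ := And.intro ha hb
    exact ⟨c * c', map_mul _ _ _⟩
  | add _ _ ha hb =>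
    obtain ⟨⟨c, rfl⟩, c', rfl⟩ := And.intro ha hb
    exact ⟨c + c', map_add _ _ _⟩

lemma IsOreReachable.noZeroDivisors (h : IsOreReachable ∅ S) (hq : q ≠ 0) :
    NoZeroDivisors (CellAlgebra q S) := by
  obtain ⟨f, -, -, hprime⟩ := h.exists_algHom hq
  have h0 : NoZeroDivisors (CellAlgebra q ∅) :=
    (RingEquiv.ofBijective _ CellAlgebra.bijective_algebraMap_empty).symm.injective.noZeroDivisors _
      (map_zero _) (map_mul _)
  rw [← isNormalPrime_zero_iff, ← map_zero f]
  exact hprime 0 (isNormalPrime_zero_iff.2 h0) fun _ _ => ⟨1, one_ne_zero, by simp⟩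

end Reachable

section Hook

variable {S : Set (ℕ × ℕ)} {n c a b : ℕ}

/-- The `n × n` square of cells, the cells of column `n` in rows `c ≤ i < a`, and the cells of
row `n` in columns `j < b`. -/
def hook (n c a b : ℕ) : Set (ℕ × ℕ) :=
  {s | s.1 < n ∧ s.2 < n ∨ s.2 = n ∧ c ≤ s.1 ∧ s.1 < a ∨ s.1 = n ∧ s.2 < b}

/-- The `n × n` square of cells. -/
def square (n : ℕ) : Set (ℕ × ℕ) := {s | s.1 < n ∧ s.2 < n}

@[simp]
lemma mem_hook {i j : ℕ} :
    (i, j) ∈ hook n c a b ↔ i < n ∧ j < n ∨ j = n ∧ c ≤ i ∧ i < a ∨ i = n ∧ j < b := Iff.rfl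

@[simp]
lemma mem_square {i j : ℕ} : (i, j) ∈ square n ↔ i < n ∧ j < n := Iff.rfl

lemma hook_zero_zero : hook n c 0 0 = square n := by
  ext ⟨i, j⟩
  simp

lemma hook_succ_self : hook n 0 (n + 1) n = square (n + 1) := by
  ext ⟨i, j⟩
  simp only [mem_hook, mem_square]
  omega

lemma insert_corner_hook (hc : c ≤ n) : insert (n, n) (hook n c n n) = hook n c (n + 1) n := by
  ext ⟨i, j⟩
  simp only [Set.mem_insert_iff, Prod.mk.injEq, mem_hook]
  omega

lemma insert_hook_col (hc : c ≤ a) : insert (a, n) (hook n c a 0) = hook n c (a + 1) 0 := by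
  ext ⟨i, j⟩
  simp only [Set.mem_insert_iff, Prod.mk.injEq, mem_hook]
  omega

lemma hook_succ_of_lt (ha : a < c) : hook n c (a + 1) 0 = hook n c a 0 := by
  ext ⟨i, j⟩
  simp only [mem_hook]
  omega

lemma insert_hook_row : insert (n, b) (hook n c a b) = hook n c a (b + 1) := by
  ext ⟨i, j⟩
  simp only [Set.mem_insert_iff, Prod.mk.injEq, mem_hook]
  omega

lemma isOreStep_hook_col (hc : c ≤ 1) (ha : a < n) : IsOreStep (hook n c a 0) (a, n) := by
  constructor <;> simp only [mem_hook, ne_eq, Prod.mk.injEq] <;> omega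

lemma isOreStep_hook_row (hc : c ≤ 1) (hb : b < n) : IsOreStep (hook n c n b) (n, b) := by
  constructor <;> simp only [mem_hook, ne_eq, Prod.mk.injEq] <;> omega

lemma isOreStep_hook_corner (hc : c ≤ 1) : IsOreStep (hook n c n n) (n, n) := by
  constructor <;> simp only [mem_hook, ne_eq, Prod.mk.injEq] <;> omega

lemma isOreReachable_hook_col (hc : c ≤ 1) (ha : a ≤ n) :
    IsOreReachable (square n) (hook n c a 0) := by
  induction a with
  | zero => exact hook_zero_zero ▸ .refl _
  | succ a ih =>
    rcases lt_or_ge a c with hac | hca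
    · exact hook_succ_of_lt hac ▸ ih (by omega)
    · exact (ih (by omega)).tail ⟨_, isOreStep_hook_col hc ha, (insert_hook_col hca).symm⟩

lemma isOreReachable_hook (hc : c ≤ 1) (hb : b ≤ n) :
    IsOreReachable (square n) (hook n c n b) := by
  induction b with
  | zero => exact isOreReachable_hook_col hc le_rfl
  | succ b ih =>
    exact (ih (by omega)).tail ⟨_, isOreStep_hook_row hc hb, insert_hook_row.symm⟩

lemma isOreReachable_square : IsOreReachable ∅ (square n) := by
  induction n with
  | zero =>
    rw [show square 0 = ∅ from Set.eq_empty_of_forall_notMem (by simp)]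
    exact .refl ∅
  | succ n ih =>
    refine (ih.trans (isOreReachable_hook zero_le_one le_rfl)).tail
      ⟨_, isOreStep_hook_corner zero_le_one, ?_⟩
    rw [insert_corner_hook n.zero_le, hook_succ_self]

end Hook

section Evaluation

variable {k : Type*} [Field k] {q : k} {S P : Set (ℕ × ℕ)} {n : ℕ}

lemma isQuantumOn_indicator (hP : P ⊆ S) (hrow : ∀ i j l, (i, j) ∈ P → (i, l) ∈ P → j = l)
    (hcol : ∀ i r j, (i, j) ∈ P → (r, j) ∈ P → i = r)
    (hdiag : ∀ i r j l, i < r → j < l → (i, l) ∈ P → (r, j) ∈ P → (r, l) ∉ S) :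
    IsQuantumOn q S (P.indicator (1 : ℕ × ℕ → k)) := by
  have hmul {s t : ℕ × ℕ} (h : s ∈ P → t ∉ P) :
      P.indicator (1 : ℕ × ℕ → k) s * P.indicator 1 t = 0 := by
    by_cases hs : s ∈ P
    · rw [Set.indicator_of_notMem (h hs), mul_zero]
    · rw [Set.indicator_of_notMem hs, zero_mul]
  refine ⟨fun i j l hjl => ?_, fun {i r} j hir => ?_, fun _ _ => mul_comm _ _,
    fun {i r j l} hir hjl hS => ?_, fun hs => Set.indicator_of_notMem (fun h => hs (hP h)) _⟩
  · rw [mul_comm, hmul fun hl hj => hjl.ne (hrow i j l hj hl), smul_zero]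
  · rw [mul_comm, hmul fun hr hi => hir.ne (hcol i r j hi hr), smul_zero]
  · rw [hmul fun h₁ h₂ => hdiag i r j l hir hjl h₁ h₂ hS, smul_zero, add_zero, mul_comm]

lemma qdet_indicator (σ : Equiv.Perm (Fin n)) (hσ : ∀ i j : Fin n, (↑i, ↑j) ∈ P ↔ σ i = j) :
    qdet q (fun i j : Fin n => P.indicator (1 : ℕ × ℕ → k) (i, j)) = (-q) ^ invCount σ := by
  rw [qdet, Finset.sum_eq_single σ]
  · simp [(hσ _ _).2 rfl]
  · intro τ _ hτ
    obtain ⟨i, hi⟩ : ∃ i, σ i ≠ τ i := by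
      by_contra! h
      exact hτ (Equiv.ext fun i => (h i).symm)
    rw [List.prod_ofFn, Finset.prod_eq_zero (Finset.mem_univ i), smul_zero]
    simpa [hσ] using hi
  · simp

end Evaluation

section Determinant

variable {k : Type*} [Field k] {A : Type*} [Ring A] [Algebra k A] {q : k} {S : Set (ℕ × ℕ)}
  {X : ℕ × ℕ → A} {m n c : ℕ}

lemma IsQuantumOn.isQMat (h : IsQuantumOn q S X)
    (hS : Set.Ioo 0 m ×ˢ Set.Ioo 0 n ⊆ S) :
    IsQMat q fun (i : Fin m) (j : Fin n) => X (i, j) :=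
  ⟨fun i _ _ hjl => h.row i hjl, fun _ _ j hir => h.col j hir, fun _ _ _ _ => h.anti,
    fun i r j l hir hjl => sub_eq_iff_eq_add'.2
      (h.diag hir hjl (hS ⟨⟨i.val.zero_le.trans_lt hir, r.2⟩, j.val.zero_le.trans_lt hjl, l.2⟩))⟩

namespace CellAlgebra

/-- The quantum determinant of the top left `n × n` block. -/
def det (q : k) (S : Set (ℕ × ℕ)) (n : ℕ) : CellAlgebra q S :=
  qdet q fun i j : Fin n => gen q S (i, j)

lemma lift_det (h : IsQuantumOn q S X) (n : ℕ) :
    lift h (det q S n) = qdet q fun i j : Fin n => X (i, j) := by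
  simp [det, map_qdet]

lemma commute_det_gen (hq : q ≠ 0) (hS : Set.Ioo 0 n ×ˢ Set.Ioo 0 n ⊆ S)
    {s : ℕ × ℕ} (hs : s ∈ square n) : Commute (det q S n) (gen q S s) :=
  ((isQuantumOn_gen q S).isQMat hS).commute_qdet hq ⟨s.1, hs.1⟩ ⟨s.2, hs.2⟩

lemma commute_det (hq : q ≠ 0) (hS : Set.Ioo 0 n ×ˢ Set.Ioo 0 n ⊆ S)
    (hSn : S ⊆ square n) (a : CellAlgebra q S) : Commute (det q S n) a := by
  induction a using CellAlgebra.induction with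
  | algebraMap r => exact (Algebra.commutes r _).symm
  | gen s hs => exact commute_det_gen hq hS (hSn hs)
  | mul a b ha hb => exact ha.mul_right hb
  | add a b ha hb => exact ha.add_right hb

lemma det_mul_gen_col (hq : q ≠ 0)
    (hS : Set.Ioo 0 n ×ˢ Set.Ioo 0 (n + 1) ⊆ S) {i : ℕ} (hi : i < n) :
    det q S n * gen q S (i, n) = q • (gen q S (i, n) * det q S n) := by
  simpa [det] using ((isQuantumOn_gen q S).isQMat hS).qdet_mul_col_last hq ⟨i, hi⟩

lemma det_mul_gen_row (hq : q ≠ 0)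
    (hS : Set.Ioo 0 (n + 1) ×ˢ Set.Ioo 0 n ⊆ S) {j : ℕ} (hj : j < n) :
    det q S n * gen q S (n, j) = q • (gen q S (n, j) * det q S n) := by
  have hX := (isQuantumOn_gen q S).isQMat hS
  have h := hX.transpose.qdet_mul_col_last hq ⟨j, hj⟩
  rw [qdet_transpose (fun a b : Fin n => gen q S (a.castSucc, b)) fun _ _ _ _ =>
    (isQuantumOn_gen q S).anti] at h
  simpa [det] using h

lemma isNormalPrime_det_hook (hq : q ≠ 0) (hc : c ≤ 1)
    (hd : IsNormalPrime (det q (square n) n)) : IsNormalPrime (det q (hook n c n n) n) := by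
  obtain ⟨f, -, hgen, hprime⟩ := (isOreReachable_hook (c := c) hc (le_refl n)).exists_algHom hq
  have hf : f (det q (square n) n) = det q (hook n c n n) n := by
    simp_rw [det, map_qdet]
    congr! with i j
    exact hgen _ ⟨i.2, j.2⟩
  rw [← hf]
  refine hprime _ hd fun ⟨i, j⟩ hs => ?_
  rw [hf]
  by_cases hi : i < n ∧ j = n
  · obtain ⟨hi, rfl⟩ := hi
    refine ⟨q⁻¹, inv_ne_zero hq, ?_⟩
    rw [det_mul_gen_col hq ?_ hi, inv_smul_smul₀ hq]
    rintro ⟨i, j⟩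
    simp only [Set.mem_prod, Set.mem_Ioo, mem_hook]
    omega
  by_cases hj : i = n ∧ j < n
  · obtain ⟨rfl, hj⟩ := hj
    refine ⟨q⁻¹, inv_ne_zero hq, ?_⟩
    rw [det_mul_gen_row hq ?_ hj, inv_smul_smul₀ hq]
    rintro ⟨i, j⟩
    simp only [Set.mem_prod, Set.mem_Ioo, mem_hook]
    omega
  · refine ⟨1, one_ne_zero, ?_⟩
    rw [(isQuantumOn_gen q _).eq_zero, mul_zero, zero_mul, smul_zero]
    simp only [mem_hook, mem_square] at hs ⊢
    omega

lemma det_ne_zero (hq : q ≠ 0) (hS : ∀ i < n, (i, i) ∈ S) : det q S n ≠ 0 := by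
  have h : IsQuantumOn q S ({s | s.1 < n ∧ s.1 = s.2}.indicator (1 : ℕ × ℕ → k)) := by
    refine isQuantumOn_indicator ?_ ?_ ?_ ?_
    · rintro ⟨i, j⟩ ⟨hi, hij⟩
      obtain rfl : i = j := hij
      exact hS i hi
    all_goals simp only [Set.mem_ofPred_eq]; omega
  intro h0
  have h1 := lift_det h n
  rw [h0, map_zero, qdet_indicator 1 (by simp [Fin.ext_iff])] at h1
  exact pow_ne_zero _ (neg_ne_zero.2 hq) h1.symm

/-- Evaluate at the permutation matrix of the transposition of the last two indices. -/
lemma not_det_dvd_det_succ (hq : q ≠ 0) (hS : ∀ i < n, (i, i) ∈ S) (hcol : (n, n + 1) ∈ S)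
    (hrow : (n + 1, n) ∈ S) (hcorner : (n + 1, n + 1) ∉ S) :
    ¬ det q S (n + 1) ∣ det q S (n + 2) := by
  let P : Set (ℕ × ℕ) :=
    {s | s.1 < n ∧ s.1 = s.2 ∨ s.1 = n ∧ s.2 = n + 1 ∨ s.1 = n + 1 ∧ s.2 = n}
  have h : IsQuantumOn q S (P.indicator (1 : ℕ × ℕ → k)) := by
    refine isQuantumOn_indicator ?_ ?_ ?_ ?_
    · rintro ⟨i, j⟩ (h | h | h) <;> obtain ⟨h, hj⟩ := h <;> dsimp only at h hj <;> subst hj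
      exacts [hS i h, h ▸ hcol, h ▸ hrow]
    · simp only [P, Set.mem_ofPred_eq]; omega
    · simp only [P, Set.mem_ofPred_eq]; omega
    · intro i r j l hir hjl h₁ h₂
      obtain ⟨rfl, rfl⟩ : r = n + 1 ∧ l = n + 1 := by
        simp only [P, Set.mem_ofPred_eq] at h₁ h₂
        omega
      exact hcorner
  intro hdvd
  have hdvd' := map_dvd (lift h) hdvd
  rw [lift_det, lift_det, qdet_eq_zero_of_row_last, zero_dvd_iff,
    qdet_indicator (Equiv.swap (Fin.last n).castSucc (Fin.last (n + 1)))] at hdvd'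
  · exact pow_ne_zero _ (neg_ne_zero.2 hq) hdvd'
  · intro i j
    rw [Equiv.swap_apply_def]
    split_ifs <;> simp_all [P, Fin.ext_iff] <;> omega
  · intro j
    simp [P]
    omega

lemma not_det_dvd_one (hn : n ≠ 0) : ¬ det q S n ∣ 1 := by
  have h0 : IsQuantumOn q S (fun _ => (0 : k)) := by constructor <;> simp
  intro hdvd
  obtain ⟨m, rfl⟩ := Nat.exists_eq_succ_of_ne_zero hn
  have hdvd' := map_dvd (lift h0) hdvd
  rw [lift_det, qdet_eq_zero_of_row_last fun _ => rfl, map_one, zero_dvd_iff] at hdvd'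
  exact one_ne_zero hdvd'

lemma det_eq_inclusion_add (hs : IsOreStep S (n, n)) :
    det q (insert (n, n) S) (n + 1) =
      inclusion q hs (det q S n) * gen q (insert (n, n) S) (n, n) +
        inclusion q hs (det q S (n + 1)) := by
  have h := qdet_eq_add_of_eq_off_corner (q := q)
    (X := fun i j : Fin (n + 1) => gen q (insert (n, n) S) (i, j))
    (Y := fun i j : Fin (n + 1) => inclusion q hs (gen q S (i, j))) fun i j hij =>
      (inclusion_gen_of_ne hs fun h => hij (by simpa [Fin.ext_iff] using h)).symm
  simp only [det, map_qdet, h]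
  congr! 2
  · congr! with i j
    exact (inclusion_gen_of_ne hs (by simp [i.2.ne])).symm
  · simp

theorem isNormalPrime_det_succ (hq : q ≠ 0) (hc : c ≤ 1) (hcn : c ≤ n - 1)
    (hd : IsNormalPrime (det q (square n) n)) :
    IsNormalPrime (det q (hook n c (n + 1) n) (n + 1)) := by
  have hcorner := isOreStep_hook_corner (n := n) hc
  have hB : NoZeroDivisors (CellAlgebra q (hook n c n n)) :=
    (isOreReachable_square.trans (isOreReachable_hook hc le_rfl)).noZeroDivisors hq
  have hdB := isNormalPrime_det_hook hq hc hd
  have hde (b : CellAlgebra q (hook n c n n)) (hb : det q (hook n c n n) n ∣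
      b * det q (hook n c n n) (n + 1)) : det q (hook n c n n) n ∣ b := by
    cases n with
    | zero => simp [det, qdet, invCount]
    | succ m =>
      refine (hdB.dvd_or_dvd hb).resolve_right (not_det_dvd_det_succ hq ?_ ?_ ?_ ?_)
      all_goals simp only [mem_hook, true_and]; omega
  rw [← insert_corner_hook (by omega), det_eq_inclusion_add hcorner]
  refine isNormalPrime_linear (isOreExtension_inclusion hcorner hq).bijective_oreEval
    hdB.toIsNormal (det_ne_zero hq fun i hi => .inl ⟨hi, hi⟩) hde ?_
  rw [← det_eq_inclusion_add hcorner, insert_corner_hook (by omega)]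
  refine commute_det hq ?_ ?_ <;> rintro ⟨i, j⟩
  · simp only [Set.mem_prod, Set.mem_Ioo, mem_hook]
    omega
  · simp only [mem_hook, mem_square]
    omega

theorem isNormalPrime_det_square (hq : q ≠ 0) (n : ℕ) : IsNormalPrime (det q (square n) n) := by
  induction n with
  | zero =>
    have h1 : det q (square 0) 0 = 1 := by simp [det, qdet, invCount]
    rw [h1]
    exact ⟨.of_commute .one_left, fun _ => .inl (one_dvd _)⟩
  | succ n ih =>
    rw [← hook_succ_self]
    exact isNormalPrime_det_succ hq zero_le_one n.pred.zero_le ih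

end CellAlgebra

end Determinant

section Ideal

lemma mem_span_iff_dvd {R A : Type*} [Ring R] [Ring A] {G : Set R} {d : A} (hd : IsNormal d)
    (π : R →+* A) (hG : ∀ g ∈ G, d ∣ π g) (ρ : A →+* (TwoSidedIdeal.span G).ringCon.Quotient)
    (hρ : ∀ a, ρ (π a) = (TwoSidedIdeal.span G).ringCon.mk' a) (hρd : ρ d = 0) {a : R} :
    a ∈ TwoSidedIdeal.span G ↔ d ∣ π a := by
  constructor
  · intro ha
    induction ha using TwoSidedIdeal.span_induction with
    | mem g hg => exact hG g hg
    | zero => simp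
    | add a b _ _ ha hb => simpa using dvd_add ha hb
    | neg a _ ha => simpa using ha
    | left_absorb b a _ ha => simpa using hd.dvd_mul_of_dvd (π b) ha
    | right_absorb b a _ ha => simpa using ha.mul_right (π b)
  · rintro ⟨b, hb⟩
    rw [← TwoSidedIdeal.ker_ringCon_mk' (TwoSidedIdeal.span G), TwoSidedIdeal.mem_ker, ← hρ, hb,
      map_mul, hρd, zero_mul]

end Ideal

section QuantumMatrixAlgebra

variable {k : Type*} [Field k] {A : Type*} [Ring A] [Algebra k A] {q : k} {m n : ℕ}

lemma isQMat_qX (q : k) (m n : ℕ) : IsQMat q (qX k q m n) := by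
  have hrel {f g : FreeAlgebra k (Fin m × Fin n)} (h : QMRel k q m n f g) :
      RingQuot.mkAlgHom k (QMRel k q m n) f = RingQuot.mkAlgHom k (QMRel k q m n) g :=
    RingQuot.mkAlgHom_rel k h
  refine ⟨fun i j l h => ?_, fun i r j h => ?_, fun i r j l h₁ h₂ => ?_, fun i r j l h₁ h₂ => ?_⟩
  · simpa only [qX, map_mul, map_smul] using hrel (.row i j l h)
  · simpa only [qX, map_mul, map_smul] using hrel (.col i r j h)
  · simpa only [qX, map_mul] using hrel (.anti i r j l h₁ h₂)
  · simpa only [qX, map_mul, map_smul, map_add, sub_eq_iff_eq_add'] using hrel (.diag i r j l h₁ h₂)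

/-- The homomorphism from the quantum matrix algebra given by a quantum matrix. -/
def liftQM {X : Fin m → Fin n → A} (hX : IsQMat q X) : OqM k q m n →ₐ[k] A :=
  RingQuot.liftAlgHom k ⟨FreeAlgebra.lift k fun s => X s.1 s.2, by
    obtain ⟨row, col, anti, diag⟩ := hX
    rintro _ _ (⟨i, j, l, h⟩ | ⟨i, r, j, h⟩ | ⟨i, r, j, l, h₁, h₂⟩ | ⟨i, r, j, l, h₁, h₂⟩)
    · simpa using row i j l h
    · simpa using col i r j h
    · simpa using anti i r j l h₁ h₂
    · simpa [sub_eq_iff_eq_add'] using diag i r j l h₁ h₂⟩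

@[simp]
lemma liftQM_qX {X : Fin m → Fin n → A} (hX : IsQMat q X) (i : Fin m) (j : Fin n) :
    liftQM hX (qX k q m n i j) = X i j :=
  (RingQuot.liftAlgHom_mkAlgHom_apply k _ _ _).trans (FreeAlgebra.lift_ι_apply _ _)

lemma OqM_hom_ext {f g : OqM k q m n →ₐ[k] A}
    (h : ∀ i j, f (qX k q m n i j) = g (qX k q m n i j)) : f = g :=
  RingQuot.ringQuot_ext' _ _ _ (FreeAlgebra.hom_ext (funext fun s => h s.1 s.2))

/-- The extension by zero of a matrix to `ℕ × ℕ`. -/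
def extendZero (X : Fin m → Fin n → A) (s : ℕ × ℕ) : A :=
  if h : s.1 < m ∧ s.2 < n then X ⟨s.1, h.1⟩ ⟨s.2, h.2⟩ else 0

@[simp]
lemma extendZero_coe (X : Fin m → Fin n → A) (i : Fin m) (j : Fin n) :
    extendZero X (i, j) = X i j := by
  simp [extendZero]

lemma _root_.IsQMat.isQuantumOn {X : Fin m → Fin n → A} (hX : IsQMat q X) {S : Set (ℕ × ℕ)}
    (hS : ∀ s ∈ S, s.1 < m ∧ s.2 < n) (h0 : ∀ i j, (↑i, ↑j) ∉ S → X i j = 0) :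
    IsQuantumOn q S (extendZero X) := by
  obtain ⟨row, col, anti, diag⟩ := hX
  refine ⟨fun i j l hjl => ?_, fun {i r} j hir => ?_, fun {i r j l} hir hjl => ?_,
    fun {i r j l} hir hjl hrl => ?_, fun {s} hs => ?_⟩
  · by_cases h : i < m ∧ l < n
    · simpa [extendZero, h, hjl.trans h.2] using row ⟨i, h.1⟩ ⟨j, hjl.trans h.2⟩ ⟨l, h.2⟩ hjl
    · simp [extendZero, h]
  · by_cases h : r < m ∧ j < n
    · simpa [extendZero, h, hir.trans h.1] using col ⟨i, hir.trans h.1⟩ ⟨r, h.1⟩ ⟨j, h.2⟩ hir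
    · simp [extendZero, h]
  · by_cases h : r < m ∧ l < n
    · simpa [extendZero, h, hir.trans h.1, hjl.trans h.2] using
        anti ⟨i, hir.trans h.1⟩ ⟨r, h.1⟩ ⟨j, hjl.trans h.2⟩ ⟨l, h.2⟩ hir hjl
    · rcases not_and_or.1 h with h | h <;> simp [extendZero, h]
  · obtain ⟨hr, hl⟩ := hS _ hrl
    simpa [extendZero, hr, hl, hir.trans hr, hjl.trans hl, sub_eq_iff_eq_add'] using
      diag ⟨i, hir.trans hr⟩ ⟨r, hr⟩ ⟨j, hjl.trans hl⟩ ⟨l, hl⟩ hir hjl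
  · unfold extendZero
    split_ifs with h
    · exact h0 ⟨s.1, h.1⟩ ⟨s.2, h.2⟩ hs
    · rfl

section ToCell

variable {S : Set (ℕ × ℕ)} (hS : Set.Ioo 0 m ×ˢ Set.Ioo 0 n ⊆ S)

/-- The homomorphism from the quantum matrix algebra that kills the generators outside `S`. -/
def toCellAlgebra : OqM k q m n →ₐ[k] CellAlgebra q S :=
  liftQM ((CellAlgebra.isQuantumOn_gen q S).isQMat hS)

@[simp]
lemma toCellAlgebra_qX (i : Fin m) (j : Fin n) :
    toCellAlgebra hS (qX k q m n i j) = .gen q S (i, j) :=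
  liftQM_qX _ i j

theorem mem_span_iff_toCellAlgebra_dvd (hSmn : ∀ s ∈ S, s.1 < m ∧ s.2 < n)
    {G : Set (OqM k q m n)} {D : OqM k q m n} (hD : IsNormal (toCellAlgebra hS D))
    (hDG : D ∈ TwoSidedIdeal.span G)
    (hqX : ∀ i j, (↑i, ↑j) ∉ S → qX k q m n i j ∈ TwoSidedIdeal.span G)
    (hG : ∀ g ∈ G, toCellAlgebra hS D ∣ toCellAlgebra hS g) {a : OqM k q m n} :
    a ∈ TwoSidedIdeal.span G ↔ toCellAlgebra hS D ∣ toCellAlgebra hS a := by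
  let mk := (TwoSidedIdeal.span G).ringCon.mkₐ k
  have hmk {b} (hb : b ∈ TwoSidedIdeal.span G) : mk b = 0 := by
    rwa [← TwoSidedIdeal.ker_ringCon_mk' (TwoSidedIdeal.span G), TwoSidedIdeal.mem_ker] at hb
  let ρ : CellAlgebra q S →ₐ[k] (TwoSidedIdeal.span G).ringCon.Quotient :=
    CellAlgebra.lift (((isQMat_qX q m n).map mk).isQuantumOn hSmn fun i j hij => hmk (hqX i j hij))
  have hρ : ρ.comp (toCellAlgebra hS) = mk := OqM_hom_ext fun i j => by simp [ρ]
  exact mem_span_iff_dvd hD (toCellAlgebra hS).toRingHom hG ρ.toRingHom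
    (DFunLike.congr_fun hρ) ((DFunLike.congr_fun hρ D).trans (hmk hDG))

end ToCell

lemma Ioo_prod_Ioo_subset_hook :
    Set.Ioo 0 (m + 1) ×ˢ Set.Ioo 0 (m + 1) ⊆ hook m 1 (m + 1) m := by
  rintro ⟨i, j⟩
  simp only [Set.mem_prod, Set.mem_Ioo, mem_hook]
  omega

lemma toCellAlgebra_qdet (q : k) (m : ℕ) :
    toCellAlgebra Ioo_prod_Ioo_subset_hook (qdet q (qX k q (m + 1) (m + 1))) =
      .det q (hook m 1 (m + 1) m) (m + 1) := by
  simp [map_qdet, CellAlgebra.det]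

lemma mem_span_qdet_qX_iff
    (hdet : IsNormal (CellAlgebra.det q (hook m 1 (m + 1) m) (m + 1)))
    {a : OqM k q (m + 1) (m + 1)} :
    a ∈ TwoSidedIdeal.span {qdet q (qX k q (m + 1) (m + 1)), qX k q _ _ 0 (Fin.last m)} ↔
      .det q (hook m 1 (m + 1) m) (m + 1) ∣ toCellAlgebra Ioo_prod_Ioo_subset_hook a := by
  rw [← toCellAlgebra_qdet] at hdet ⊢
  refine mem_span_iff_toCellAlgebra_dvd Ioo_prod_Ioo_subset_hook ?_ hdet
    (TwoSidedIdeal.subset_span (.inl rfl)) ?_ ?_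
  · rintro ⟨i, j⟩
    simp only [mem_hook]
    omega
  · intro i j hij
    obtain ⟨rfl, rfl⟩ : i = 0 ∧ j = Fin.last m := by
      simp only [mem_hook, Fin.ext_iff, Fin.val_zero, Fin.val_last] at hij ⊢
      omega
    exact TwoSidedIdeal.subset_span (.inr rfl)
  · rintro g (rfl | rfl)
    · exact dvd_rfl
    · rw [toCellAlgebra_qX, (CellAlgebra.isQuantumOn_gen q _).eq_zero (by simp)]
      exact dvd_zero _

end QuantumMatrixAlgebra

end QuantumMatrix

open QuantumMatrix in
/-- For `n ≥ 3`, the ideal `⟨det_q, X_{1n}⟩` of `O_q(M_n)` is a completely prime ideal: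
the quotient is a (nonzero) domain. -/
theorem detq_x1n_completely_prime {k : Type*} [Field k] (q : k) (hq : q ≠ 0)
    {n : ℕ} (hn : 3 ≤ n) :
    (1 : OqM k q n n) ∉ TwoSidedIdeal.span
        {qdet q (qX k q n n), qX k q n n ⟨0, by omega⟩ ⟨n - 1, by omega⟩} ∧
    ∀ a b : OqM k q n n,
      a * b ∈ TwoSidedIdeal.span
          {qdet q (qX k q n n), qX k q n n ⟨0, by omega⟩ ⟨n - 1, by omega⟩} →
      a ∈ TwoSidedIdeal.span
          {qdet q (qX k q n n), qX k q n n ⟨0, by omega⟩ ⟨n - 1, by omega⟩} ∨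
      b ∈ TwoSidedIdeal.span
          {qdet q (qX k q n n), qX k q n n ⟨0, by omega⟩ ⟨n - 1, by omega⟩} := by
  obtain ⟨m, rfl⟩ : ∃ m, n = m + 1 := ⟨n - 1, by omega⟩
  have hprime := CellAlgebra.isNormalPrime_det_succ hq le_rfl (by omega : 1 ≤ m - 1)
    (CellAlgebra.isNormalPrime_det_square hq m)
  have hmem (a : OqM k q (m + 1) (m + 1)) := mem_span_qdet_qX_iff (a := a) hprime.toIsNormal
  refine ⟨fun h1 => ?_, fun a b hab => ?_⟩
  · have hdvd := (hmem 1).1 h1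
    rw [map_one] at hdvd
    exact CellAlgebra.not_det_dvd_one m.succ_ne_zero hdvd
  · have hdvd := (hmem (a * b)).1 hab
    rw [map_mul] at hdvd
    exact (hprime.dvd_or_dvd hdvd).imp (hmem a).2 (hmem b).2
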